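/- arXiv:2507.03338 — 3 statements merged into one kernel-verified Lean document; each statement's English description precedes it below -/
import Mathlib

section
/- Let k ∈ ℕ and τ ∈ ((k−1)/k, 1]. Then there exist c, N > 0 depending only on k and τ such that the following holds. For any finite set Z with |Z| ≥ N, if for each equidistributed map ψ : Z → {1,...,k} (i.e., ||ψ⁻¹(j)| − |Z|/k| < 1 for all j) one chooses a subset Z_ψ ⊆ Z with |Z_ψ| ≥ τ|Z|, then there is some J ⊆ Z with |J| ≥ c|Z| such that every map σ : J → {1,...,k} extends to an equidistributed map ψ : Z → {1,...,k} with J ⊆ Z_ψ. -/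
/-- A map `ψ : Z → {1,…,k}` is equidistributed if every fiber has cardinality within `1`
of `|Z|/k`. -/
def Equidistributed {Z : Type*} [Fintype Z] (k : ℕ) (ψ : Z → Fin k) : Prop :=
  ∀ j : Fin k,
    |((Finset.univ.filter fun z => ψ z = j).card : ℝ) - (Fintype.card Z : ℝ) / k| < 1

/-!
Regard each `ψ` restricted to `Z_ψ` as a partial colouring of `Z`; a family of partial colourings
shatters `J` if every colouring of `J` is the restriction of a member defined on all of `J`. Fix `m`
and put `q = 1 - 1/k`. Process the points `z` one by one. If some colour `i` is used at `z` by less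
than a `q ^ m` fraction of the family, discard these members; the others avoid `i` at `z`. Otherwise
pass to the colour class at `z` shattering the fewest sets: it avoids every other colour at `z`.
If all `k` classes shatter `J`, then the whole family shatters both `J` and `J ∪ {z}`, so this
class shatters at most `q` times as many sets as the whole family. In both cases the ratio of the
size of the family to the `m`-th power of the number of shattered sets drops at most by the factor
`1 - q ^ m`.

At the end all members avoid one fixed colouring of `Z`. An avoiding `ψ` agrees with that colouring
only outside `Z_ψ`, hence in at most `(1 - τ)|Z|` points, where `1 - τ < 1/k`, and by a Chernoff
bound there are at most `b ^ |Z|` such maps for some `b < k`. Since the number of equidistributed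
maps is `k ^ |Z|` up to a factor polynomial in `|Z|`, a large `m` yields exponentially many
shattered sets, and one of them has linear size.
-/

section PartialColourings

open Finset

variable {α Z κ : Type*}

/-- The partial colourings `f a`, `a ∈ S`, shatter `J` if every colouring of `J` is the restriction
of one of them; `f a z = none` means that `z` is outside the domain of `f a`. This is the analogue
of `Finset.Shatters` for several colours and partial functions. -/
def PartialShatters (f : α → Z → Option κ) (S : Finset α) (J : Finset Z) : Prop :=
  ∀ σ : Z → κ, ∃ a ∈ S, ∀ z ∈ J, f a z = some (σ z)

open Classical in
/-- The subsets of `W` shattered by the partial colourings `f a`, `a ∈ S`; compare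
`Finset.shatterer`. -/
noncomputable def partialShatterer (f : α → Z → Option κ) (S : Finset α) (W : Finset Z) :
    Finset (Finset Z) :=
  {J ∈ W.powerset | PartialShatters f S J}

open Classical in
/-- The indices in `S` whose partial colouring agrees with `σ` nowhere on `W`. -/
noncomputable def avoiders (f : α → Z → Option κ) (S : Finset α) (W : Finset Z) (σ : Z → κ) :
    Finset α :=
  {a ∈ S | ∀ z ∈ W, f a z ≠ some (σ z)}

open Classical in
/-- The indices in `S` whose partial colouring gives `z` the colour `i`. -/
noncomputable def colourClass (f : α → Z → Option κ) (S : Finset α) (z : Z) (i : κ) : Finset α :=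
  {a ∈ S | f a z = some i}

variable {f : α → Z → Option κ} {S S' : Finset α} {J W : Finset Z} {z : Z}

theorem mem_partialShatterer : J ∈ partialShatterer f S W ↔ J ⊆ W ∧ PartialShatters f S J := by
  simp only [partialShatterer, mem_filter, mem_powerset]

theorem mem_avoiders {a : α} {σ : Z → κ} :
    a ∈ avoiders f S W σ ↔ a ∈ S ∧ ∀ z ∈ W, f a z ≠ some (σ z) := by
  simp only [avoiders, mem_filter]

theorem mem_colourClass {a : α} {i : κ} : a ∈ colourClass f S z i ↔ a ∈ S ∧ f a z = some i := by
  simp only [colourClass, mem_filter]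

theorem colourClass_subset {i : κ} : colourClass f S z i ⊆ S := fun _ ha => (mem_colourClass.1 ha).1

theorem PartialShatters.mono (hS : S' ⊆ S) (h : PartialShatters f S' J) : PartialShatters f S J :=
  fun σ => (h σ).imp fun _ ha => ⟨hS ha.1, ha.2⟩

theorem PartialShatters.insert [DecidableEq Z]
    (h : ∀ i, PartialShatters f (colourClass f S z i) J) : PartialShatters f S (insert z J) := by
  intro σ
  obtain ⟨a, ha, haJ⟩ := h (σ z) σ
  obtain ⟨haS, haz⟩ := mem_colourClass.1 ha
  exact ⟨a, haS, (forall_mem_insert ..).2 ⟨haz, haJ⟩⟩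

theorem partialShatterer_mono (hS : S' ⊆ S) {W' : Finset Z} (hW : W' ⊆ W) :
    partialShatterer f S' W' ⊆ partialShatterer f S W := by
  intro J hJ
  obtain ⟨hJW, hJS⟩ := mem_partialShatterer.1 hJ
  exact mem_partialShatterer.2 ⟨hJW.trans hW, hJS.mono hS⟩

theorem avoiders_empty (σ : Z → κ) : avoiders f S ∅ σ = S := by
  ext a
  simp [mem_avoiders]

theorem card_partialShatterer_pos (hS : S.Nonempty) : 0 < #(partialShatterer f S W) :=
  card_pos.2 ⟨∅, mem_partialShatterer.2 ⟨empty_subset W,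
    fun _ => hS.imp fun _ ha => ⟨ha, fun _ hz => (notMem_empty _ hz).elim⟩⟩⟩

theorem card_avoiders_le_update [DecidableEq Z] (hz : z ∉ W) (hS : S' ⊆ S) {i : κ}
    (hi : ∀ a ∈ S', f a z ≠ some i) (σ : Z → κ) :
    #(avoiders f S' W σ) ≤ #(avoiders f S (insert z W) (Function.update σ z i)) := by
  refine card_le_card fun a ha => ?_
  obtain ⟨haS, haW⟩ := mem_avoiders.1 ha
  refine mem_avoiders.2 ⟨hS haS, (forall_mem_insert ..).2 ⟨?_, fun y hy => ?_⟩⟩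
  · simpa only [Function.update_self] using hi a haS
  · simpa only [Function.update_of_ne (ne_of_mem_of_not_mem hy hz)] using haW y hy

theorem sum_card_add_card_biUnion_le {ι β : Type*} [Fintype ι] [DecidableEq β]
    (A : ι → Finset β) :
    ∑ i, #(A i) + #(univ.biUnion A) ≤
      Fintype.card ι * #(univ.biUnion A) + #{x ∈ univ.biUnion A | ∀ i, x ∈ A i} := by
  classical
  have card_eq (i : ι) : #(A i) = ∑ x ∈ univ.biUnion A, if x ∈ A i then 1 else 0 := by
    rw [sum_boole, Nat.cast_id, filter_mem_eq_inter,
      inter_eq_right.2 (subset_biUnion_of_mem A (mem_univ i))]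
  rw [sum_congr rfl fun i _ => card_eq i, sum_comm, card_eq_sum_ones, mul_sum, card_filter,
    ← sum_add_distrib, ← sum_add_distrib]
  refine sum_le_sum fun x _ => ?_
  rw [← card_filter, mul_one]
  split_ifs with hx
  · exact Nat.add_le_add_right (card_le_univ _) 1
  · obtain ⟨i, hi⟩ := not_forall.1 hx
    exact card_lt_univ_of_notMem (x := i) (by simpa using hi)

theorem card_biUnion_add_card_filter_le_card_partialShatterer [DecidableEq Z] [Fintype κ]
    (hz : z ∉ W) :
    let A : κ → Finset (Finset Z) := fun i => partialShatterer f (colourClass f S z i) W;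
    #(univ.biUnion A) + #{J ∈ univ.biUnion A | ∀ i, J ∈ A i} ≤
      #(partialShatterer f S (insert z W)) := by
  intro A
  have notMem {J : Finset Z} (hJ : J ∈ univ.biUnion A) : z ∉ J := by
    obtain ⟨i, -, hi⟩ := mem_biUnion.1 hJ
    exact fun hzJ => hz ((mem_partialShatterer.1 hi).1 hzJ)
  have insert_injOn : Set.InjOn (insert z)
      (({J ∈ univ.biUnion A | ∀ i, J ∈ A i} : Finset (Finset Z)) : Set (Finset Z)) := by
    intro J hJ J' hJ' h
    rw [← erase_insert (notMem (mem_filter.1 hJ).1), h,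
      erase_insert (notMem (mem_filter.1 hJ').1)]
  rw [← card_image_of_injOn insert_injOn, ← card_union_of_disjoint]
  · refine card_le_card (union_subset (biUnion_subset.2 fun i _ => ?_) (image_subset_iff.2 ?_))
    · exact partialShatterer_mono colourClass_subset (subset_insert _ _)
    · intro J hJ
      obtain ⟨hJU, hJA⟩ := mem_filter.1 hJ
      obtain ⟨i, -, hi⟩ := mem_biUnion.1 hJU
      exact mem_partialShatterer.2 ⟨insert_subset_insert z (mem_partialShatterer.1 hi).1,
        .insert fun i => (mem_partialShatterer.1 (hJA i)).2⟩
  · refine disjoint_left.2 fun J hJ hJ' => ?_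
    obtain ⟨J', -, rfl⟩ := mem_image.1 hJ'
    exact notMem hJ (mem_insert_self z J')

theorem exists_card_partialShatterer_colourClass_le [DecidableEq Z] [Fintype κ] [Nontrivial κ]
    (hz : z ∉ W) :
    ∃ i, (#(partialShatterer f (colourClass f S z i) W) : ℝ) ≤
      (1 - (Fintype.card κ : ℝ)⁻¹) * #(partialShatterer f S (insert z W)) := by
  let A := fun i => partialShatterer f (colourClass f S z i) W
  obtain ⟨i, -, hi⟩ := exists_min_image univ (fun i => #(A i)) univ_nonempty
  refine ⟨i, ?_⟩
  have hmin : Fintype.card κ * #(A i) ≤ ∑ j, #(A j) := by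
    simpa only [sum_const, card_univ, smul_eq_mul] using sum_le_sum hi
  have hsum := sum_card_add_card_biUnion_le A
  have hunion : #(univ.biUnion A) + #{J ∈ univ.biUnion A | ∀ i, J ∈ A i} ≤
      #(partialShatterer f S (insert z W)) :=
    card_biUnion_add_card_filter_le_card_partialShatterer hz
  have hnat : Fintype.card κ * #(A i) + #(partialShatterer f S (insert z W)) ≤
      Fintype.card κ * #(partialShatterer f S (insert z W)) := by
    obtain ⟨l, hl⟩ := Nat.exists_eq_add_of_lt (Fintype.one_lt_card (α := κ))
    rw [hl] at hmin hsum ⊢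
    have := Nat.mul_le_mul_left l (Nat.le_of_add_right_le hunion)
    linarith
  have hreal : (Fintype.card κ * #(A i) + #(partialShatterer f S (insert z W)) : ℝ) ≤
      Fintype.card κ * #(partialShatterer f S (insert z W)) := mod_cast hnat
  have hκ : (0 : ℝ) < Fintype.card κ := mod_cast Fintype.card_pos
  rw [one_sub_mul, ← div_eq_inv_mul, le_sub_iff_add_le]
  refine le_of_mul_le_mul_left ?_ hκ
  rwa [mul_add, mul_div_cancel₀ _ hκ.ne']

theorem mul_card_le_mul_card_partialShatterer_insert_pow [DecidableEq Z] [Fintype κ]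
    [Nontrivial κ] {m : ℕ} {C M : ℝ} (hC : 0 ≤ C) (hM : 0 ≤ M) (hz : z ∉ W)
    (hlarge : ∀ i, (1 - (Fintype.card κ : ℝ)⁻¹) ^ m * #S ≤ #(colourClass f S z i))
    (h : ∀ i, C * #(colourClass f S z i) ≤ M * #(partialShatterer f (colourClass f S z i) W) ^ m) :
    C * #S ≤ M * #(partialShatterer f S (insert z W)) ^ m := by
  obtain ⟨i, hi⟩ := exists_card_partialShatterer_colourClass_le (f := f) (S := S) hz
  set q : ℝ := 1 - (Fintype.card κ : ℝ)⁻¹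
  have hq : 0 < q := sub_pos.2 (inv_lt_one_of_one_lt₀ (mod_cast Fintype.one_lt_card))
  refine le_of_mul_le_mul_left ?_ (pow_pos hq m)
  calc q ^ m * (C * #S) = C * (q ^ m * #S) := mul_left_comm _ _ _
    _ ≤ C * #(colourClass f S z i) := mul_le_mul_of_nonneg_left (hlarge i) hC
    _ ≤ M * #(partialShatterer f (colourClass f S z i) W) ^ m := h i
    _ ≤ M * (q * #(partialShatterer f S (insert z W))) ^ m := by gcongr
    _ = q ^ m * (M * #(partialShatterer f S (insert z W)) ^ m) := by rw [mul_pow, mul_left_comm]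

open Classical in
theorem mul_one_sub_mul_card_le_mul_card_partialShatterer_insert_pow {m : ℕ} {C M q : ℝ} {i : κ}
    (hC : 0 ≤ C) (hM : 0 ≤ M) (hsmall : #(colourClass f S z i) ≤ q * #S)
    (h : C * #{a ∈ S | f a z ≠ some i} ≤
      M * #(partialShatterer f {a ∈ S | f a z ≠ some i} W) ^ m) :
    C * (1 - q) * #S ≤ M * #(partialShatterer f S (insert z W)) ^ m := by
  have hsplit : (#(colourClass f S z i) + #{a ∈ S | f a z ≠ some i} : ℝ) = #S :=
    mod_cast S.card_filter_add_card_filter_not _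
  calc C * (1 - q) * #S = C * (#S - q * #S) := by ring
    _ ≤ C * #{a ∈ S | f a z ≠ some i} := by gcongr; linarith
    _ ≤ M * #(partialShatterer f {a ∈ S | f a z ≠ some i} W) ^ m := h
    _ ≤ M * #(partialShatterer f S (insert z W)) ^ m := by
        gcongr
        exact partialShatterer_mono (filter_subset _ _) (subset_insert _ _)

theorem pow_mul_card_le_mul_card_partialShatterer_pow [Fintype κ] [Nontrivial κ] (m : ℕ) {M : ℝ}
    (hM : ∀ σ, #(avoiders f S W σ) ≤ M) :
    (1 - (1 - (Fintype.card κ : ℝ)⁻¹) ^ m) ^ #W * #S ≤ M * #(partialShatterer f S W) ^ m := by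
  classical
  set q : ℝ := (1 - (Fintype.card κ : ℝ)⁻¹) ^ m
  have hq0 : 0 ≤ q := pow_nonneg (sub_nonneg.2 (Nat.cast_inv_le_one _)) m
  have hq1 : 0 ≤ 1 - q := sub_nonneg.2 <|
    pow_le_one₀ (sub_nonneg.2 (Nat.cast_inv_le_one _)) (sub_le_self _ (by positivity))
  have hM0 : 0 ≤ M := (Nat.cast_nonneg _).trans (hM fun _ => Classical.arbitrary κ)
  induction W using Finset.induction_on generalizing S with
  | empty =>
    obtain rfl | hS := S.eq_empty_or_nonempty
    · simpa using by positivity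
    rw [card_empty, pow_zero, one_mul]
    have hSM : (#S : ℝ) ≤ M := by
      simpa only [avoiders_empty] using hM fun _ => Classical.arbitrary κ
    exact hSM.trans <| le_mul_of_one_le_right hM0 <|
      one_le_pow₀ (mod_cast card_partialShatterer_pos hS)
  | insert z W hz ih =>
    rw [card_insert_of_notMem hz]
    have ih_of_ne {S' : Finset α} (hS : S' ⊆ S) {i : κ} (hi : ∀ a ∈ S', f a z ≠ some i) :
        (1 - q) ^ #W * #S' ≤ M * #(partialShatterer f S' W) ^ m :=
      ih fun σ => (Nat.cast_le.2 (card_avoiders_le_update hz hS hi σ)).trans (hM _)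
    by_cases! hsmall : ∃ i, (#(colourClass f S z i) : ℝ) < q * #S
    · obtain ⟨i, hi⟩ := hsmall
      rw [pow_succ]
      exact mul_one_sub_mul_card_le_mul_card_partialShatterer_insert_pow (by positivity) hM0 hi.le
        (ih_of_ne (filter_subset _ _) fun a ha => (mem_filter.1 ha).2)
    · have hclass (i : κ) : (1 - q) ^ #W * #(colourClass f S z i) ≤
          M * #(partialShatterer f (colourClass f S z i) W) ^ m := by
        obtain ⟨j, hji⟩ := exists_ne i
        refine ih_of_ne colourClass_subset (i := j) fun a ha => ?_
        simpa only [(mem_colourClass.1 ha).2, ne_eq, Option.some_inj] using hji.symm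
      calc (1 - q) ^ (#W + 1) * #S ≤ (1 - q) ^ #W * #S := by
            gcongr ?_ * _
            exact pow_le_pow_of_le_one hq1 (sub_le_self _ hq0) (Nat.le_succ _)
        _ ≤ M * #(partialShatterer f S (insert z W)) ^ m :=
            mul_card_le_mul_card_partialShatterer_insert_pow (by positivity) hM0 hz hsmall hclass

end PartialColourings

section ExponentialMoments

open Finset Filter Topology

theorem card_le_pow_of_sum_pow_le {α : Type*} {s : Finset α} {w : α → ℕ} {x b t : ℝ} {n : ℕ}
    (hx0 : 0 < x) (hx1 : x ≤ 1) (hw : ∀ a ∈ s, (w a : ℝ) ≤ t * n)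
    (hb : ∑ a ∈ s, x ^ w a ≤ b ^ n) : (#s : ℝ) ≤ (b * x ^ (-t)) ^ n := by
  have hmarkov : #s * x ^ (t * n) ≤ b ^ n :=
    calc #s * x ^ (t * n) = ∑ _a ∈ s, x ^ (t * n) := by rw [sum_const, nsmul_eq_mul]
      _ ≤ ∑ a ∈ s, x ^ w a := sum_le_sum fun a ha => by
        rw [← Real.rpow_natCast]
        exact Real.rpow_le_rpow_of_exponent_ge hx0 hx1 (hw a ha)
      _ ≤ b ^ n := hb
  rw [mul_pow, ← Real.rpow_mul_natCast hx0.le, neg_mul, Real.rpow_neg hx0.le, ← div_eq_mul_inv]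
  exact (le_div_iff₀ (by positivity)).2 hmarkov

theorem sum_pow_card_agree {R Z κ : Type*} [CommRing R] [Fintype Z] [DecidableEq Z] [Fintype κ]
    [DecidableEq κ] (i : Z → κ) (x : R) :
    ∑ ψ : Z → κ, x ^ #{z | ψ z = i z} = (Fintype.card κ - 1 + x) ^ Fintype.card Z := by
  have hfactor (z : Z) : ∑ j, (if j = i z then x else 1) = Fintype.card κ - 1 + x := by
    have hsplit (j : κ) : (if j = i z then x else 1) = 1 + if j = i z then x - 1 else 0 := by
      split_ifs <;> ring
    rw [sum_congr rfl fun j _ => hsplit j, sum_add_distrib, sum_ite_eq' univ, if_pos (mem_univ _),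
      sum_const, card_univ, nsmul_one]
    ring
  calc ∑ ψ : Z → κ, x ^ #{z | ψ z = i z}
      = ∑ ψ : Z → κ, ∏ z, (if ψ z = i z then x else 1) := by
        simp only [prod_ite, prod_const, one_pow, mul_one]
    _ = ∏ z, ∑ j, (if j = i z then x else 1) :=
        (Fintype.prod_sum fun z j => if j = i z then x else 1).symm
    _ = (Fintype.card κ - 1 + x) ^ Fintype.card Z := by
        rw [prod_congr rfl fun z _ => hfactor z, prod_const, card_univ]

theorem card_le_pow_of_card_agree_le {Z κ : Type*} [Fintype Z] [Fintype κ] [Nonempty κ]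
    [DecidableEq κ] {s : Finset (Z → κ)} (i : Z → κ) {x t : ℝ} (hx0 : 0 < x)
    (hx1 : x ≤ 1) (hs : ∀ ψ ∈ s, (#{z | ψ z = i z} : ℝ) ≤ t * Fintype.card Z) :
    (#s : ℝ) ≤ ((Fintype.card κ - 1 + x) * x ^ (-t)) ^ Fintype.card Z := by
  classical
  refine card_le_pow_of_sum_pow_le hx0 hx1 hs ?_
  rw [← sum_pow_card_agree i x]
  exact sum_le_univ_sum_of_nonneg fun _ => by positivity

theorem card_le_pow_of_card_le {Z : Type*} [Fintype Z] {s : Finset (Finset Z)} {x t : ℝ}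
    (hx0 : 0 < x) (hx1 : x ≤ 1) (hs : ∀ J ∈ s, (#J : ℝ) ≤ t * Fintype.card Z) :
    (#s : ℝ) ≤ ((1 + x) * x ^ (-t)) ^ Fintype.card Z := by
  classical
  refine card_le_pow_of_sum_pow_le hx0 hx1 hs ?_
  calc ∑ J ∈ s, x ^ #J ≤ ∑ J : Finset Z, x ^ #J :=
        sum_le_univ_sum_of_nonneg fun _ => by positivity
    _ = (1 + x) ^ Fintype.card Z := by
        simpa [add_comm] using Fintype.sum_pow_mul_eq_add_pow Z x 1

-- At `x = 1` the left-hand side equals `k` and has derivative `1 - t * k > 0`.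
theorem exists_mul_rpow_neg_lt {k t : ℝ} (ht : t * k < 1) :
    ∃ x ∈ Set.Ioo (0 : ℝ) 1, (k - 1 + x) * x ^ (-t) < k := by
  have hderiv : HasDerivAt (fun x : ℝ => (k - 1 + x) * x ^ (-t) - k) (1 - t * k) 1 := by
    convert! (((hasDerivAt_id (1 : ℝ)).const_add (k - 1)).mul
      (Real.hasDerivAt_rpow_const (p := -t) (Or.inl one_ne_zero))).sub_const k using 1
    simp only [id, Real.one_rpow]
    ring
  have hsign := eventually_nhdsWithin_sign_eq_of_deriv_pos
    (by rw [hderiv.deriv]; linarith) (by simp)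
  obtain ⟨x, hx, hxI⟩ :=
    ((hsign.filter_mono nhdsWithin_le_nhds).and (Ioo_mem_nhdsLT one_pos)).exists
  refine ⟨x, hxI, ?_⟩
  rw [sign_neg (sub_neg.2 hxI.2), sign_eq_neg_one_iff] at hx
  exact sub_neg.1 hx

theorem exists_one_add_mul_rpow_neg_pow_lt (m : ℕ) {θ : ℝ} (hθ : 1 < θ) :
    ∃ y ∈ Set.Ioc (0 : ℝ) 1, ∃ c > (0 : ℝ), ((1 + y) * y ^ (-c)) ^ m < θ := by
  have hy : ∀ᶠ y in 𝓝[>] (0 : ℝ), (1 + y) ^ m < θ :=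
    nhdsWithin_le_nhds <|
      (by fun_prop : ContinuousAt (fun y : ℝ => (1 + y) ^ m) 0).eventually_lt_const (by simpa)
  obtain ⟨y, hyθ, hyI⟩ := (hy.and (Ioc_mem_nhdsGT one_pos)).exists
  have hcont : ContinuousAt (fun c : ℝ => ((1 + y) * y ^ (-c)) ^ m) 0 :=
    ((Real.continuousAt_const_rpow hyI.1.ne').comp continuousAt_neg).const_mul (1 + y) |>.pow m
  have hc : ∀ᶠ c in 𝓝[>] (0 : ℝ), ((1 + y) * y ^ (-c)) ^ m < θ :=
    nhdsWithin_le_nhds <| hcont.eventually_lt_const (by simpa)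
  obtain ⟨c, hcθ, hc0⟩ := (hc.and self_mem_nhdsWithin).exists
  exact ⟨y, hyI, c, hc0, hcθ⟩

theorem exists_mul_pow_lt_mul_one_sub_pow {b k q : ℝ} (hb : 0 < b) (hbk : b < k) (hq1 : q < 1) :
    ∃ m : ℕ, ∃ y ∈ Set.Ioc (0 : ℝ) 1, ∃ c > (0 : ℝ),
      b * ((1 + y) * y ^ (-c)) ^ m < k * (1 - q ^ m) := by
  have hk : 0 < k := hb.trans hbk
  obtain ⟨m, hm⟩ := exists_pow_lt_of_lt_one (sub_pos.2 ((div_lt_one hk).2 hbk)) hq1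
  have hbm : b < k * (1 - q ^ m) := by
    rw [mul_comm, ← div_lt_iff₀ hk]
    linarith
  obtain ⟨y, hy, c, hc, hlt⟩ := exists_one_add_mul_rpow_neg_pow_lt m ((one_lt_div hb).2 hbm)
  exact ⟨m, y, hy, c, hc, by rwa [← lt_div_iff₀' hb]⟩

theorem exists_rpow_neg_mul_pow_lt_mul_one_sub_pow {k t : ℝ} (hk : 1 ≤ k) (ht : t * k < 1) :
    ∃ x ∈ Set.Ioc (0 : ℝ) 1, ∃ m : ℕ, ∃ y ∈ Set.Ioc (0 : ℝ) 1, ∃ c > (0 : ℝ),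
      (k - 1 + x) * x ^ (-t) * ((1 + y) * y ^ (-c)) ^ m < k * (1 - (1 - k⁻¹) ^ m) := by
  obtain ⟨x, hx, hxk⟩ := exists_mul_rpow_neg_lt ht
  have hpos : 0 < (k - 1 + x) * x ^ (-t) :=
    mul_pos (by linarith [hx.1]) (Real.rpow_pos_of_pos hx.1 _)
  exact ⟨x, Set.Ioo_subset_Ioc_self hx, exists_mul_pow_lt_mul_one_sub_pow hpos hxk <|
    sub_lt_self 1 (inv_pos.2 (zero_lt_one.trans_le hk))⟩

end ExponentialMoments

section Counting

open Finset Filter Topology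

-- Counting `n` as well multiplies the factorial of its residue class by `n / k + 1`.
theorem prod_factorial_count_modEq {k : ℕ} (hk : 0 < k) (n : ℕ) :
    ∏ j : Fin k, (n.count (· ≡ j [MOD k])).factorial = ∏ i ∈ range n, (i / k + 1) := by
  induction n with
  | zero => simp
  | succ n ih =>
    let r : Fin k := ⟨n % k, n.mod_lt hk⟩
    have hr (j : Fin k) : n ≡ j [MOD k] ↔ j = r := by
      rw [Fin.ext_iff, Nat.ModEq, Nat.mod_eq_of_lt j.2, eq_comm]
    have hcount : n.count (· ≡ r [MOD k]) = n / k := by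
      simp [r, Nat.count_modEq_card n hk]
    have hstep (j : Fin k) : ((n + 1).count (· ≡ j [MOD k])).factorial =
        (n.count (· ≡ j [MOD k])).factorial * if j = r then n / k + 1 else 1 := by
      simp only [Nat.count_succ, hr]
      split_ifs with h
      · rw [h, Nat.factorial_succ, hcount, mul_comm]
      · rw [add_zero, mul_one]
    rw [prod_congr rfl fun j _ => hstep j, prod_mul_distrib, ih, prod_range_succ,
      prod_ite_eq' univ, if_pos (mem_univ _)]

theorem pow_mul_prod_div_add_one_le (k n : ℕ) :
    k ^ n * ∏ i ∈ range n, (i / k + 1) ≤ n.factorial * k.multichoose n := by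
  rw [Nat.multichoose_eq, ← Nat.ascFactorial_eq_factorial_mul_choose',
    Nat.ascFactorial_eq_prod_range, ← card_range n, ← prod_const, card_range, ← prod_mul_distrib]
  refine prod_le_prod' fun i _ => ?_
  rw [mul_add, mul_one, add_comm]
  exact Nat.add_le_add_left (Nat.mul_div_le i k) k

theorem eventually_pow_mul_multichoose_lt {k : ℕ} {θ : ℝ} (hθ0 : 0 ≤ θ) (hθ : θ < k) :
    ∀ᶠ n in atTop, θ ^ n * k.multichoose n < (k : ℝ) ^ n := by
  have hk0 : (0 : ℝ) < k := hθ0.trans_lt hθ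
  have hratio : ‖θ / k‖ < 1 := by
    rwa [Real.norm_of_nonneg (by positivity), div_lt_one hk0]
  filter_upwards [(summable_choose_mul_geometric_of_norm_lt_one (k - 1)
    hratio).tendsto_atTop_zero.eventually_lt_const one_pos] with n hn
  have hchoose : k.multichoose n = (n + (k - 1)).choose (k - 1) := by
    rw [Nat.multichoose_eq, ← Nat.choose_symm_add, Nat.sub_add_comm (mod_cast hk0), add_comm]
  rwa [← hchoose, div_pow, mul_div_assoc', div_lt_one (by positivity), mul_comm] at hn

theorem abs_count_modEq_sub_div_lt_one {k : ℕ} (hk : 0 < k) (n v : ℕ) :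
    |(n.count (· ≡ v [MOD k]) : ℝ) - n / k| < 1 := by
  have hk0 : (0 : ℚ) < k := mod_cast hk
  have hv0 : 0 ≤ ((v % k : ℕ) : ℚ) / k := by positivity
  have hv1 : ((v % k : ℕ) : ℚ) / k < 1 := (div_lt_one hk0).2 (mod_cast v.mod_lt hk)
  obtain ⟨hlo, hhi⟩ := Int.ceil_eq_iff.1 (Nat.count_modEq_card_eq_ceil n hk v).symm
  rw [sub_div, Int.cast_natCast] at hlo hhi
  have h : |(n.count (· ≡ v [MOD k]) : ℚ) - n / k| < 1 := abs_lt.2 ⟨by linarith, by linarith⟩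
  simpa using (Rat.cast_lt (K := ℝ)).2 h

theorem ncard_orbit_mul_prod_factorial {Z ι : Type*} [Fintype Z] [Fintype ι] [DecidableEq ι]
    (ψ : Z → ι) :
    (MulAction.orbit (Equiv.Perm Z)ᵈᵐᵃ ψ).ncard * ∏ i, (#{z | ψ z = i}).factorial =
      (Fintype.card Z).factorial := by
  classical
  have hstab : Nat.card (MulAction.stabilizer (Equiv.Perm Z)ᵈᵐᵃ ψ) =
      ∏ i, (#{z | ψ z = i}).factorial := by
    have hequiv : MulAction.stabilizer (Equiv.Perm Z)ᵈᵐᵃ ψ ≃ {g : Equiv.Perm Z // ψ ∘ g = ψ} :=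
      DomMulAct.mk.symm.subtypeEquiv fun _ => DomMulAct.mem_stabilizer_iff
    rw [Nat.card_congr hequiv, Nat.card_eq_fintype_card, DomMulAct.stabilizer_card]
    simp only [Fintype.card_subtype]
  rw [← hstab, ← MulAction.index_stabilizer, Subgroup.index_mul_card,
    Nat.card_congr DomMulAct.mk.symm, Nat.card_eq_fintype_card, Fintype.card_perm]

/-- The colouring of `Z` that assigns the residues modulo `k` in turn, along an enumeration of `Z`.
It is the equidistributed map from which all others are counted. -/
noncomputable def roundRobin (k : ℕ) [NeZero k] (Z : Type*) [Fintype Z] : Z → Fin k :=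
  fun z => Fin.ofNat k (Fintype.equivFin Z z)

theorem card_roundRobin_eq {k : ℕ} [NeZero k] {Z : Type*} [Fintype Z] (j : Fin k) :
    #{z | roundRobin k Z z = j} = (Fintype.card Z).count (· ≡ j [MOD k]) := by
  have hmod (n : ℕ) : Fin.ofNat k n = j ↔ n ≡ j [MOD k] := by
    rw [Fin.ext_iff, Fin.val_ofNat, Nat.ModEq, Nat.mod_eq_of_lt j.2]
  rw [Nat.count_eq_card_filter_range]
  refine card_bij (fun z _ => Fintype.equivFin Z z) (fun z hz => ?_) (fun z _ y _ h => ?_)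
    fun n hn => ?_
  · exact mem_filter.2 ⟨mem_range.2 (Fin.is_lt _), (hmod _).1 ((mem_filter_univ z).1 hz)⟩
  · exact (Fintype.equivFin Z).injective (Fin.ext h)
  · obtain ⟨hn, hnj⟩ := mem_filter.1 hn
    refine ⟨(Fintype.equivFin Z).symm ⟨n, mem_range.1 hn⟩, mem_filter_univ _ |>.2 ?_, ?_⟩
    · rwa [roundRobin, Equiv.apply_symm_apply, hmod]
    · rw [Equiv.apply_symm_apply]

theorem equidistributed_roundRobin (k : ℕ) [NeZero k] (Z : Type*) [Fintype Z] :
    Equidistributed k (roundRobin k Z) := fun j => by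
  rw [card_roundRobin_eq]
  exact abs_count_modEq_sub_div_lt_one (NeZero.pos k) _ _

theorem Equidistributed.comp_perm {k : ℕ} {Z : Type*} [Fintype Z] {ψ : Z → Fin k}
    (hψ : Equidistributed k ψ) (g : Equiv.Perm Z) : Equidistributed k (ψ ∘ g) := fun j => by
  have hfiber : #{z | (ψ ∘ g) z = j} = #{z | ψ z = j} :=
    card_equiv g fun z => by simp only [mem_filter_univ, Function.comp_apply]
  rw [hfiber]
  exact hψ j

open Classical in
theorem pow_card_le_card_equidistributed_mul_multichoose (k : ℕ) [NeZero k] (Z : Type*)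
    [Fintype Z] :
    k ^ Fintype.card Z ≤
      #{ψ : Z → Fin k | Equidistributed k ψ} * k.multichoose (Fintype.card Z) := by
  set E : Finset (Z → Fin k) := {ψ | Equidistributed k ψ}
  set P := ∏ i ∈ range (Fintype.card Z), (i / k + 1)
  have horbit : (MulAction.orbit (Equiv.Perm Z)ᵈᵐᵃ (roundRobin k Z)).ncard ≤ #E := by
    rw [← Set.ncard_coe_finset]
    refine Set.ncard_le_ncard ?_
    rintro _ ⟨g, rfl⟩
    exact mem_coe.2 <| mem_filter_univ _ |>.2 <|
      (equidistributed_roundRobin k Z).comp_perm (DomMulAct.mk.symm g)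
  have hfactorial : (Fintype.card Z).factorial ≤ #E * P := by
    rw [← ncard_orbit_mul_prod_factorial (roundRobin k Z)]
    simp only [card_roundRobin_eq, prod_factorial_count_modEq (NeZero.pos k)]
    exact Nat.mul_le_mul_right P horbit
  have hP : 0 < P := prod_pos fun _ _ => Nat.succ_pos _
  refine Nat.le_of_mul_le_mul_right ?_ hP
  calc k ^ Fintype.card Z * P ≤ (Fintype.card Z).factorial * k.multichoose (Fintype.card Z) :=
        pow_mul_prod_div_add_one_le k _
    _ ≤ #E * P * k.multichoose (Fintype.card Z) := Nat.mul_le_mul_right _ hfactorial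
    _ = #E * k.multichoose (Fintype.card Z) * P := mul_right_comm _ _ _

open Classical in
theorem exists_forall_pow_lt_card_equidistributed {k : ℕ} {θ : ℝ} (hθ0 : 0 ≤ θ) (hθ : θ < k) :
    ∃ N : ℕ, ∀ (Z : Type*) [Fintype Z], N ≤ Fintype.card Z →
      θ ^ Fintype.card Z < #{ψ : Z → Fin k | Equidistributed k ψ} := by
  have hk : 0 < k := mod_cast hθ0.trans_lt hθ
  have : NeZero k := ⟨hk.ne'⟩
  obtain ⟨N, hN⟩ := eventually_atTop.1 (eventually_pow_mul_multichoose_lt hθ0 hθ)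
  refine ⟨N, fun Z _ hZ => lt_of_mul_lt_mul_right ((hN _ hZ).trans_le ?_) (Nat.cast_nonneg _)⟩
  exact_mod_cast pow_card_le_card_equidistributed_mul_multichoose k Z

end Counting

section DenseFamilies

open Finset

variable {Z κ : Type*}

/-- The partial colouring that agrees with `ψ` on `D` and is undefined elsewhere. -/
def restrictColouring [DecidableEq Z] (D : Finset Z) (ψ : Z → κ) : Z → Option κ :=
  fun z => if z ∈ D then some (ψ z) else none

theorem restrictColouring_eq_some [DecidableEq Z] {D : Finset Z} {ψ : Z → κ} {z : Z} {i : κ} :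
    restrictColouring D ψ z = some i ↔ z ∈ D ∧ ψ z = i := by
  simp only [restrictColouring, Option.ite_none_right_eq_some, Option.some_inj]

theorem card_avoiders_restrictColouring_le [Fintype Z] [DecidableEq Z] [Fintype κ] [Nonempty κ]
    {S : Finset (Z → κ)} {D : (Z → κ) → Finset Z} {x τ : ℝ} (hx0 : 0 < x) (hx1 : x ≤ 1)
    (hD : ∀ ψ ∈ S, τ * Fintype.card Z ≤ #(D ψ)) (σ : Z → κ) :
    (#(avoiders (fun ψ => restrictColouring (D ψ) ψ) S univ σ) : ℝ) ≤
      ((Fintype.card κ - 1 + x) * x ^ (-(1 - τ))) ^ Fintype.card Z := by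
  classical
  refine card_le_pow_of_card_agree_le σ hx0 hx1 fun ψ hψ => ?_
  obtain ⟨hψS, hψσ⟩ := mem_avoiders.1 hψ
  have hsub : ({z | ψ z = σ z} : Finset Z) ⊆ (D ψ)ᶜ := fun z hz =>
    mem_compl.2 fun hzD =>
      hψσ z (mem_univ z) (restrictColouring_eq_some.2 ⟨hzD, (mem_filter_univ z).1 hz⟩)
  have hcompl : (#(D ψ) + #(D ψ)ᶜ : ℝ) = Fintype.card Z := mod_cast card_add_card_compl (D ψ)
  calc (#{z | ψ z = σ z} : ℝ) ≤ #(D ψ)ᶜ := mod_cast card_le_card hsub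
    _ ≤ (1 - τ) * Fintype.card Z := by linarith [hD ψ hψS]

theorem exists_lt_card_partialShatters {α : Type*} [Fintype Z] [Fintype κ] [Nontrivial κ]
    {f : α → Z → Option κ} {S : Finset α} (m : ℕ) {b y c : ℝ} (hy0 : 0 < y) (hy1 : y ≤ 1)
    (hb : ∀ σ, #(avoiders f S univ σ) ≤ b ^ Fintype.card Z)
    (hS : (b * ((1 + y) * y ^ (-c)) ^ m) ^ Fintype.card Z <
      (1 - (1 - (Fintype.card κ : ℝ)⁻¹) ^ m) ^ Fintype.card Z * #S) :
    ∃ J, c * Fintype.card Z < #J ∧ PartialShatters f S J := by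
  by_contra! hJ
  have hsmall : (#(partialShatterer f S univ) : ℝ) ≤ ((1 + y) * y ^ (-c)) ^ Fintype.card Z :=
    card_le_pow_of_card_le hy0 hy1 fun J hJS =>
      not_lt.1 fun h => hJ J h (mem_partialShatterer.1 hJS).2
  have hb0 : 0 ≤ b ^ Fintype.card Z :=
    (Nat.cast_nonneg _).trans (hb fun _ => Classical.arbitrary κ)
  refine hS.not_ge ?_
  calc (1 - (1 - (Fintype.card κ : ℝ)⁻¹) ^ m) ^ Fintype.card Z * #S
      ≤ b ^ Fintype.card Z * #(partialShatterer f S univ) ^ m :=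
        pow_mul_card_le_mul_card_partialShatterer_pow m hb
    _ ≤ b ^ Fintype.card Z * (((1 + y) * y ^ (-c)) ^ Fintype.card Z) ^ m := by gcongr
    _ = (b * ((1 + y) * y ^ (-c)) ^ m) ^ Fintype.card Z := by
        rw [mul_pow b, pow_right_comm]

theorem exists_forall_extension_of_pow_lt [Fintype Z] [Fintype κ] [Nontrivial κ]
    {S : Finset (Z → κ)} {D : (Z → κ) → Finset Z} {τ x y c : ℝ} {m : ℕ}
    (hx : x ∈ Set.Ioc 0 1) (hy : y ∈ Set.Ioc 0 1)
    (hD : ∀ ψ ∈ S, τ * Fintype.card Z ≤ #(D ψ))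
    (hS : ((Fintype.card κ - 1 + x) * x ^ (-(1 - τ)) * ((1 + y) * y ^ (-c)) ^ m) ^ Fintype.card Z <
      (1 - (1 - (Fintype.card κ : ℝ)⁻¹) ^ m) ^ Fintype.card Z * #S) :
    ∃ J : Finset Z, c * Fintype.card Z ≤ #J ∧
      ∀ σ : Z → κ, ∃ ψ ∈ S, (∀ z ∈ J, ψ z = σ z) ∧ J ⊆ D ψ := by
  classical
  obtain ⟨J, hJc, hJ⟩ := exists_lt_card_partialShatters m hy.1 hy.2
    (card_avoiders_restrictColouring_le hx.1 hx.2 hD) hS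
  refine ⟨J, hJc.le, fun σ => ?_⟩
  obtain ⟨ψ, hψS, hψ⟩ := hJ σ
  exact ⟨ψ, hψS, fun z hz => (restrictColouring_eq_some.1 (hψ z hz)).2,
    fun z hz => (restrictColouring_eq_some.1 (hψ z hz)).1⟩

theorem exists_forall_extension_of_one_sub_inv_lt [Fintype κ] [Nonempty κ] {τ : ℝ}
    (hτ : 1 - (Fintype.card κ : ℝ)⁻¹ < τ) :
    ∃ c θ : ℝ, 0 < c ∧ 0 ≤ θ ∧ θ < Fintype.card κ ∧
      ∀ (Z : Type*) [Fintype Z] (S : Finset (Z → κ)) (D : (Z → κ) → Finset Z),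
        θ ^ Fintype.card Z < #S → (∀ ψ ∈ S, τ * Fintype.card Z ≤ #(D ψ)) →
        ∃ J : Finset Z, c * Fintype.card Z ≤ #J ∧
          ∀ σ : Z → κ, ∃ ψ ∈ S, (∀ z ∈ J, ψ z = σ z) ∧ J ⊆ D ψ := by
  obtain hκ | hκ := subsingleton_or_nontrivial κ
  · have hcard : Fintype.card κ = 1 :=
      (Fintype.card_le_one_iff_subsingleton.2 hκ).antisymm Fintype.card_pos
    have hτ0 : 0 < τ := by simpa [hcard] using hτ
    refine ⟨τ, 0, hτ0, le_rfl, mod_cast Fintype.card_pos, fun Z _ S D hS hD => ?_⟩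
    obtain ⟨ψ, hψ⟩ : S.Nonempty :=
      card_pos.1 (mod_cast (pow_nonneg (le_refl (0 : ℝ)) _).trans_lt hS)
    exact ⟨D ψ, hD ψ hψ, fun σ => ⟨ψ, hψ, fun z _ => Subsingleton.elim _ _, subset_rfl⟩⟩
  · have hk : (1 : ℝ) ≤ Fintype.card κ := mod_cast Fintype.card_pos
    have hk0 : (0 : ℝ) < Fintype.card κ := zero_lt_one.trans_le hk
    have hτk : (1 - τ) * Fintype.card κ < 1 :=
      (lt_div_iff₀ hk0).1 (by rw [one_div]; linarith)
    obtain ⟨x, hx, m, y, hy, c, hc, hlt⟩ :=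
      exists_rpow_neg_mul_pow_lt_mul_one_sub_pow hk hτk
    set v := (Fintype.card κ - 1 + x) * x ^ (-(1 - τ)) * ((1 + y) * y ^ (-c)) ^ m
    have hv : 0 ≤ v := by
      have ⟨hx0, _⟩ := hx
      have ⟨hy0, _⟩ := hy
      have : (0 : ℝ) ≤ Fintype.card κ - 1 := sub_nonneg.2 hk
      positivity
    have hq : 0 < 1 - (1 - (Fintype.card κ : ℝ)⁻¹) ^ m :=
      pos_of_mul_pos_right (hv.trans_lt hlt) hk0.le
    refine ⟨c, v / (1 - (1 - (Fintype.card κ : ℝ)⁻¹) ^ m), hc, div_nonneg hv hq.le,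
      (div_lt_iff₀ hq).2 hlt, fun Z _ S D hS hD => ?_⟩
    rw [div_pow, div_lt_iff₀' (pow_pos hq _)] at hS
    exact exists_forall_extension_of_pow_lt hx hy hD hS

end DenseFamilies

theorem half_to_indep (k : ℕ) (hk : 1 ≤ k) (τ : ℝ)
    (hτ₁ : ((k : ℝ) - 1) / k < τ) (hτ₂ : τ ≤ 1) :
    ∃ c N : ℝ, 0 < c ∧ 0 < N ∧
      ∀ (Z : Type) [Fintype Z], N ≤ (Fintype.card Z : ℝ) →
        ∀ Zψ : (Z → Fin k) → Finset Z,
          (∀ ψ, Equidistributed k ψ → τ * (Fintype.card Z : ℝ) ≤ (Zψ ψ).card) →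
          ∃ J : Finset Z, c * (Fintype.card Z : ℝ) ≤ J.card ∧
            ∀ σ : Z → Fin k, ∃ ψ : Z → Fin k, Equidistributed k ψ ∧
              (∀ z ∈ J, ψ z = σ z) ∧ J ⊆ Zψ ψ := by
  classical
  have : NeZero k := ⟨(Nat.zero_lt_of_lt hk).ne'⟩
  have hτ : 1 - (Fintype.card (Fin k) : ℝ)⁻¹ < τ := by
    rwa [Fintype.card_fin, ← one_div, one_sub_div (NeZero.ne _)]
  obtain ⟨c, θ, hc, hθ0, hθ, hdense⟩ := exists_forall_extension_of_one_sub_inv_lt hτ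
  rw [Fintype.card_fin] at hθ
  obtain ⟨N, hN⟩ := exists_forall_pow_lt_card_equidistributed hθ0 hθ
  refine ⟨c, N + 1, hc, by positivity, fun Z _ hZ Zψ hZψ => ?_⟩
  have hcard : N ≤ Fintype.card Z := Nat.le_of_succ_le (mod_cast hZ)
  obtain ⟨J, hJc, hJ⟩ := hdense Z {ψ | Equidistributed k ψ} Zψ (hN Z hcard)
    fun ψ hψ => hZψ ψ (Finset.mem_filter_univ ψ |>.1 hψ)
  refine ⟨J, hJc, fun σ => ?_⟩
  obtain ⟨ψ, hψ, hψJ⟩ := hJ σ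
  exact ⟨ψ, (Finset.mem_filter_univ ψ).1 hψ, hψJ⟩
end

section
/- Let 0 < δ ≤ 1 and 1 < p ≤ ∞. There exist a finite set T ⊆ ℝ² and c' > 0, depending only on δ and p, such that: (1) t₁ ≥ t₂ + δ for every (t₁,t₂) ∈ T; and (2) for any n ∈ ℕ, if E is a subset of the closed unit ball of ℓ_p^n whose convex hull together with 0 contains the closed δ-ball of ℓ_p^n, then there are J ⊆ {1,...,n} with |J| ≥ c'n and (t₁,t₂) ∈ T such that for every map σ : J → {1,2} there is v ∈ E with v(j) ≥ t₁ n^{−1/p} for all j ∈ σ⁻¹(1) and v(j) ≤ t₂ n^{−1/p} for all j ∈ σ⁻¹(2). -/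
open scoped ENNReal

/-!
For every sign vector `ε` the hypothesis on the convex hull yields `v ε ∈ E` whose coordinates,
normalised to be of order one, have average correlation at least `δ` with `ε`. As `1 < p`, these
coordinates are uniformly integrable, so they may be clipped to a bounded interval.

Let `A` be a set of sign vectors that is not exponentially rare. Some coordinate of `v ε` is at
least an upper level for a fixed proportion of the `ε` in `A` and at most a lower level for another
such proportion: otherwise every coordinate would be nearly constant on `A`, and all members of `A`
would be correlated with one and the same vector, which is exponentially unlikely by Chernoff's
bound.

Splitting the cube of sign vectors again and again produces a binary tree whose depth is linear in
the dimension. Call an assignment of levels to some of the coordinates shattered by `A` if all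
choices of sides are realised by `v ε` with `ε` in `A`. As in Pajor's proof of the Sauer-Shelah
lemma, each split at least adds the numbers of shattered assignments of its two parts, so the whole
cube shatters exponentially many of them. Hence some shattered assignment involves linearly many
coordinates, and the pigeonhole principle makes its levels constant.
-/

open scoped Finset

namespace SignSelection

section Signs

variable {ι : Type*}

lemma abs_units_smul (u : ℤˣ) (x : ℝ) : |u • x| = |x| := by
  rcases Int.units_eq_one_or u with rfl | rfl <;> simp

variable [Fintype ι]

lemma sum_units_smul_sub_sum_abs_sub_le (ε : ι → ℤˣ) (x y : ι → ℝ) :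
    ∑ i, ε i • x i - ∑ i, |x i - y i| ≤ ∑ i, ε i • y i := by
  rw [sub_le_comm, ← Finset.sum_sub_distrib]
  refine Finset.sum_le_sum fun i _ => ?_
  rw [← smul_sub, ← abs_units_smul (ε i)]
  exact le_abs_self _

lemma sum_exp_sum_units_smul [DecidableEq ι] (x : ι → ℝ) :
    ∑ ε : ι → ℤˣ, Real.exp (∑ i, ε i • x i) = ∏ i, 2 * Real.cosh (x i) := by
  have sum_exp_units_smul (t : ℝ) : ∑ u : ℤˣ, Real.exp (u • t) = 2 * Real.cosh t := by
    simp [Real.cosh_eq, mul_div_cancel₀]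
  simp_rw [Real.exp_sum, ← sum_exp_units_smul, Finset.prod_univ_sum, Fintype.piFinset_univ]

lemma sum_exp_sum_units_smul_le [DecidableEq ι] (x : ι → ℝ) :
    ∑ ε : ι → ℤˣ, Real.exp (∑ i, ε i • x i) ≤
      2 ^ Fintype.card ι * Real.exp ((∑ i, x i ^ 2) / 2) := by
  rw [sum_exp_sum_units_smul, Finset.prod_mul_distrib, Finset.sum_div, Real.exp_sum,
    Finset.prod_const, Finset.card_univ]
  gcongr with i
  exact Real.cosh_le_exp_half_sq (x i)

lemma exp_mul_card_le_sum_exp {α : Type*} {A : Finset α} {f : α → ℝ} {a : ℝ}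
    (h : a * #A ≤ ∑ x ∈ A, f x) : Real.exp a * #A ≤ ∑ x ∈ A, Real.exp (f x) := by
  have tangent (x : α) : Real.exp a * (1 + (f x - a)) ≤ Real.exp (f x) := by
    rw [← add_sub_cancel a (f x), Real.exp_add, add_sub_cancel a (f x), add_comm]
    gcongr
    exact Real.add_one_le_exp _
  calc Real.exp a * #A ≤ Real.exp a * (#A + (∑ x ∈ A, f x - a * #A)) := by gcongr; linarith
    _ = ∑ x ∈ A, Real.exp a * (1 + (f x - a)) := by
      rw [← Finset.mul_sum, Finset.sum_add_distrib, Finset.sum_sub_distrib]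
      simp only [Finset.sum_const, nsmul_eq_mul, mul_one, mul_comm]
    _ ≤ ∑ x ∈ A, Real.exp (f x) := Finset.sum_le_sum fun x _ => tangent x

lemma card_le_two_pow_mul_exp {A : Finset (ι → ℤˣ)} {x : ι → ℝ} {a : ℝ}
    (h : a * #A ≤ ∑ ε ∈ A, ∑ i, ε i • x i) :
    (#A : ℝ) ≤ 2 ^ Fintype.card ι * Real.exp ((∑ i, x i ^ 2) / 2 - a) := by
  classical
  rw [Real.exp_sub, ← mul_div_assoc, le_div_iff₀' (Real.exp_pos a)]
  calc Real.exp a * #A ≤ ∑ ε ∈ A, Real.exp (∑ i, ε i • x i) := exp_mul_card_le_sum_exp h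
    _ ≤ ∑ ε : ι → ℤˣ, Real.exp (∑ i, ε i • x i) :=
      Finset.sum_le_univ_sum_of_nonneg fun ε => (Real.exp_pos _).le
    _ ≤ _ := sum_exp_sum_units_smul_le x

end Signs

section Patterns

variable {ι κ : Type*} [Fintype ι]

lemma card_mul_rpow_le_one_add_pow [DecidableEq ι] {T : Finset κ}
    {F : Finset (ι → Option κ)} (hF : F ⊆ Fintype.piFinset fun _ => T.insertNone) {x d : ℝ}
    (hx₀ : 0 < x) (hx₁ : x ≤ 1) (hd : ∀ u ∈ F, (#{j | (u j).isSome} : ℝ) ≤ d) :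
    #F * x ^ d ≤ (1 + #T * x) ^ Fintype.card ι := by
  let weight (o : Option κ) : ℝ := if o.isSome then x else 1
  have weight_nonneg (o : Option κ) : 0 ≤ weight o := by
    unfold weight; split_ifs <;> positivity
  have le_prod_weight : ∀ u ∈ F, x ^ d ≤ ∏ j, weight (u j) := fun u hu => by
    rw [Finset.prod_ite, Finset.prod_const, Finset.prod_const_one, mul_one, ← Real.rpow_natCast]
    exact Real.rpow_le_rpow_of_exponent_ge hx₀ hx₁ (hd u hu)
  calc #F * x ^ d ≤ ∑ u ∈ F, ∏ j, weight (u j) := by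
        simpa using Finset.card_nsmul_le_sum F _ _ le_prod_weight
    _ ≤ ∑ u ∈ Fintype.piFinset fun _ => T.insertNone, ∏ j, weight (u j) :=
        Finset.sum_le_sum_of_subset_of_nonneg hF
          fun u _ _ => Finset.prod_nonneg fun j _ => weight_nonneg _
    _ = (1 + #T * x) ^ Fintype.card ι := by
        rw [← Finset.prod_univ_sum]
        simp [Finset.sum_insertNone, weight]

lemma exists_le_mul_card_eq_some [DecidableEq ι] [DecidableEq κ] {T : Finset κ}
    (hT : T.Nonempty) {u : ι → Option κ} (hu : u ∈ Fintype.piFinset fun _ => T.insertNone) :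
    ∃ t ∈ T, #{j | (u j).isSome} ≤ #T * #{j | u j = some t} := by
  have support_subset :
      ({j | (u j).isSome} : Finset ι) ⊆ T.biUnion fun t => {j | u j = some t} := by
    intro j hj
    obtain ⟨t, ht⟩ := Option.isSome_iff_exists.1 (Finset.mem_filter.1 hj).2
    have htT : t ∈ T := Finset.mem_insertNone.1 (Fintype.mem_piFinset.1 hu j) t ht
    simpa [ht] using htT
  obtain ⟨t, ht, hmax⟩ := T.exists_max_image (fun t => #{j | u j = some t}) hT
  refine ⟨t, ht, (Finset.card_le_card support_subset).trans ?_⟩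
  exact Finset.card_biUnion_le_card_mul T _ _ hmax

lemma exists_pos_forall_exists_le_card_isSome (T : Finset κ) {b : ℝ} (hb : 0 < b) :
    ∃ c : ℝ, 0 < c ∧ ∀ {ι : Type*} [Fintype ι] [DecidableEq ι] {F : Finset (ι → Option κ)},
      F ⊆ (Fintype.piFinset fun _ => T.insertNone) → Real.exp (b * Fintype.card ι) ≤ #F →
        ∃ u ∈ F, c * Fintype.card ι ≤ #{j | (u j).isSome} := by
  -- The weight in `card_mul_rpow_le_one_add_pow` is `exp (-s)`.
  obtain ⟨s, hsT, hs⟩ : ∃ s : ℝ, #T * Real.exp (-s) < b / 2 ∧ 0 < s := by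
    have tendsto : Filter.Tendsto (fun s : ℝ => #T * Real.exp (-s)) Filter.atTop (nhds 0) := by
      simpa using Real.tendsto_exp_neg_atTop_nhds_zero.const_mul (#T : ℝ)
    exact ((tendsto.eventually_lt_const (half_pos hb)).and (Filter.eventually_gt_atTop 0)).exists
  refine ⟨b / (2 * s), by positivity, fun {ι _ _ F} hF hcard => ?_⟩
  set n : ℝ := (Fintype.card ι : ℝ)
  by_contra! hsmall
  obtain ⟨u, hu⟩ : F.Nonempty :=
    Finset.card_pos.1 (Nat.cast_pos.1 ((Real.exp_pos (b * n)).trans_le hcard))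
  have hn : 0 < n :=
    pos_of_mul_pos_right ((Nat.cast_nonneg _).trans_lt (hsmall u hu)) (by positivity)
  have exp_le : Real.exp (b / 2 * n) ≤ Real.exp (#T * Real.exp (-s) * n) :=
    calc Real.exp (b / 2 * n) = Real.exp (b * n) * Real.exp (-s) ^ (b / (2 * s) * n) := by
          rw [← Real.exp_mul, ← Real.exp_add]; congr 1; field_simp; ring
      _ ≤ #F * Real.exp (-s) ^ (b / (2 * s) * n) := by gcongr
      _ ≤ (1 + #T * Real.exp (-s)) ^ Fintype.card ι :=
          card_mul_rpow_le_one_add_pow hF (Real.exp_pos _) (Real.exp_le_one_iff.2 (by linarith))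
            fun u hu => (hsmall u hu).le
      _ ≤ Real.exp (#T * Real.exp (-s)) ^ Fintype.card ι := by
          gcongr; rw [add_comm]; exact Real.add_one_le_exp _
      _ = Real.exp (#T * Real.exp (-s) * n) := by rw [← Real.exp_nat_mul, mul_comm]
  have : b / 2 * n ≤ #T * Real.exp (-s) * n := Real.exp_le_exp.1 exp_le
  exact hsT.not_ge (le_of_mul_le_mul_right this hn)

end Patterns

section Shattering

variable {ι α β : Type*} [LinearOrder β]

/-- A pattern `u` assigns to some coordinates a pair of levels `(upper, lower)`. It is shattered by
`A` if every prescription `σ` of a side on those coordinates is realised by a member of `A`; the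
sides `0` and `1` of `Fin 2` stand for the upper and the lower one. -/
def ShattersPattern (W : α → ι → β) (A : Finset α) (u : ι → Option (β × β)) : Prop :=
  ∀ σ : ι → Fin 2, ∃ a ∈ A, ∀ j, ∀ t ∈ u j, (σ j = 0 → t.1 ≤ W a j) ∧ (σ j = 1 → W a j ≤ t.2)

/-- The family `W` shatters the coordinates in `J` with the same pair of levels
`t = (upper, lower)` throughout. -/
def ShattersAt (W : α → ι → β) (J : Finset ι) (t : β × β) : Prop :=
  ∀ σ : ι → Fin 2, ∃ a, ∀ j ∈ J, (σ j = 0 → t.1 ≤ W a j) ∧ (σ j = 1 → W a j ≤ t.2)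

/-- Some coordinate and some pair of levels in `T` separate two parts of `A`, each of them having
proportion at least `θ`. -/
def HasBalancedSplit (T : Finset (β × β)) (W : α → ι → β) (θ : ℝ) (A : Finset α) : Prop :=
  ∃ i, ∃ t ∈ T, θ * #A ≤ #{a ∈ A | t.1 ≤ W a i} ∧ θ * #A ≤ #{a ∈ A | W a i ≤ t.2}

variable {W : α → ι → β} {A B : Finset α} {u : ι → Option (β × β)} {i : ι} {t : β × β}

lemma ShattersPattern.mono (h : ShattersPattern W A u) (hAB : A ⊆ B) : ShattersPattern W B u :=
  fun σ => let ⟨a, ha, hσ⟩ := h σ; ⟨a, hAB ha, hσ⟩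

lemma ShattersPattern.exists_upper (h : ShattersPattern W A u) (ht : t ∈ u i) :
    ∃ a ∈ A, t.1 ≤ W a i :=
  let ⟨a, ha, hσ⟩ := h fun _ => 0; ⟨a, ha, (hσ i t ht).1 rfl⟩

lemma ShattersPattern.exists_lower (h : ShattersPattern W A u) (ht : t ∈ u i) :
    ∃ a ∈ A, W a i ≤ t.2 :=
  let ⟨a, ha, hσ⟩ := h fun _ => 1; ⟨a, ha, (hσ i t ht).2 rfl⟩

lemma shattersPattern_none (hA : A.Nonempty) : ShattersPattern W A fun _ => none :=
  fun _ => let ⟨a, ha⟩ := hA; ⟨a, ha, by simp⟩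

lemma ShattersPattern.shattersAt [Fintype ι] (h : ShattersPattern W A u) (t : β × β) :
    ShattersAt W {j | u j = some t} t := fun σ =>
  let ⟨a, _, hσ⟩ := h σ; ⟨a, fun j hj => hσ j t (Finset.mem_filter.1 hj).2⟩

lemma ShattersPattern.update [DecidableEq ι]
    (hupper : ShattersPattern W {a ∈ A | t.1 ≤ W a i} u)
    (hlower : ShattersPattern W {a ∈ A | W a i ≤ t.2} u) :
    ShattersPattern W A (Function.update u i (some t)) := by
  intro σ
  obtain ⟨a, ha, hai, haσ⟩ : ∃ a ∈ A, ((σ i = 0 → t.1 ≤ W a i) ∧ (σ i = 1 → W a i ≤ t.2)) ∧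
      ∀ j, ∀ s ∈ u j, (σ j = 0 → s.1 ≤ W a j) ∧ (σ j = 1 → W a j ≤ s.2) := by
    obtain hσi | hσi : σ i = 0 ∨ σ i = 1 := by omega
    · obtain ⟨a, ha, haσ⟩ := hupper σ
      rw [Finset.mem_filter] at ha
      exact ⟨a, ha.1, by simp [hσi, ha.2], haσ⟩
    · obtain ⟨a, ha, haσ⟩ := hlower σ
      rw [Finset.mem_filter] at ha
      exact ⟨a, ha.1, by simp [hσi, ha.2], haσ⟩
  refine ⟨a, ha, fun j s hs => ?_⟩
  obtain rfl | hji := eq_or_ne j i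
  · rw [Function.update_self, Option.mem_some_iff] at hs
    exact hs ▸ hai
  · rw [Function.update_of_ne hji] at hs
    exact haσ j s hs

lemma ShattersPattern.ne_some_of_upper (ht : t.2 < t.1)
    (h : ShattersPattern W {a ∈ A | t.1 ≤ W a i} u) : u i ≠ some t := fun hu => by
  obtain ⟨a, ha, hat⟩ := h.exists_lower hu
  exact ((Finset.mem_filter.1 ha).2.trans hat).not_gt ht

lemma ShattersPattern.ne_some_of_lower (ht : t.2 < t.1)
    (h : ShattersPattern W {a ∈ A | W a i ≤ t.2} u) : u i ≠ some t := fun hu => by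
  obtain ⟨a, ha, hat⟩ := h.exists_upper hu
  exact (hat.trans (Finset.mem_filter.1 ha).2).not_gt ht

lemma ShattersPattern.eq_none_of_upper_of_lower (ht : t.2 < t.1) (hu : ∀ s ∈ u i, s.2 < s.1)
    (hupper : ShattersPattern W {a ∈ A | t.1 ≤ W a i} u)
    (hlower : ShattersPattern W {a ∈ A | W a i ≤ t.2} u) : u i = none := by
  refine Option.eq_none_iff_forall_not_mem.2 fun s hs => lt_irrefl t.1 ?_
  obtain ⟨a, ha, has⟩ := hupper.exists_lower hs
  obtain ⟨b, hb, hbs⟩ := hlower.exists_upper hs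
  calc t.1 ≤ W a i := (Finset.mem_filter.1 ha).2
    _ ≤ s.2 := has
    _ < s.1 := hu s hs
    _ ≤ W b i := hbs
    _ ≤ t.2 := (Finset.mem_filter.1 hb).2
    _ < t.1 := ht

variable [Fintype ι] {T : Finset (β × β)}

open scoped Classical in
/-- The patterns with levels in `T` that are shattered by `A`. Their number plays the role of
the size of `A`: it is superadditive when `A` is split. -/
noncomputable def shatteredPatterns (T : Finset (β × β)) (W : α → ι → β) (A : Finset α) :
    Finset (ι → Option (β × β)) :=
  {u ∈ Fintype.piFinset fun _ => T.insertNone | ShattersPattern W A u}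

lemma mem_shatteredPatterns :
    u ∈ shatteredPatterns T W A ↔ (∀ j, u j ∈ T.insertNone) ∧ ShattersPattern W A u := by
  simp only [shatteredPatterns, Finset.mem_filter, Fintype.mem_piFinset]

lemma shatteredPatterns_mono (hAB : A ⊆ B) : shatteredPatterns T W A ⊆ shatteredPatterns T W B :=
  fun u hu => by
    rw [mem_shatteredPatterns] at hu ⊢
    exact ⟨hu.1, hu.2.mono hAB⟩

-- A pattern shattered by both parts is undefined at `i`, and may be completed there by `t`; the
-- completed pattern is shattered by neither part.
lemma card_shatteredPatterns_add_le (hT : ∀ t ∈ T, t.2 < t.1) (ht : t ∈ T) (i : ι) :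
    #(shatteredPatterns T W {a ∈ A | t.1 ≤ W a i}) +
      #(shatteredPatterns T W {a ∈ A | W a i ≤ t.2}) ≤ #(shatteredPatterns T W A) := by
  classical
  set P := shatteredPatterns T W {a ∈ A | t.1 ≤ W a i} with hP
  set Q := shatteredPatterns T W {a ∈ A | W a i ≤ t.2} with hQ
  let complete (u : ι → Option (β × β)) := Function.update u i (some t)
  have eq_none : ∀ u ∈ P ∩ Q, u i = none := fun u hu => by
    rw [Finset.mem_inter, hP, hQ, mem_shatteredPatterns, mem_shatteredPatterns] at hu
    exact hu.1.2.eq_none_of_upper_of_lower (hT t ht)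
      (fun s hs => hT s (Finset.mem_insertNone.1 (hu.1.1 i) s hs)) hu.2.2
  have complete_injOn : Set.InjOn complete (P ∩ Q : Finset _) := fun u hu v hv huv => by
    rw [← Function.update_eq_self i u, ← Function.update_eq_self i v, eq_none u hu, eq_none v hv]
    simpa only [complete, Function.update_idem] using congrArg (Function.update · i none) huv
  have image_disjoint : Disjoint (P ∪ Q) ((P ∩ Q).image complete) := by
    rw [Finset.disjoint_right, Finset.forall_mem_image]
    intro u _ hu
    have hi : complete u i = some t := Function.update_self i _ u
    obtain hu | hu := Finset.mem_union.1 hu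
    · exact (mem_shatteredPatterns.1 hu).2.ne_some_of_upper (hT t ht) hi
    · exact (mem_shatteredPatterns.1 hu).2.ne_some_of_lower (hT t ht) hi
  have complete_mem : ∀ u ∈ P ∩ Q, complete u ∈ shatteredPatterns T W A := fun u hu => by
    rw [Finset.mem_inter, hP, hQ, mem_shatteredPatterns, mem_shatteredPatterns] at hu
    refine mem_shatteredPatterns.2 ⟨fun j => ?_, hu.1.2.update hu.2.2⟩
    obtain rfl | hji := eq_or_ne j i
    · simpa [complete] using ht
    · simpa [complete, hji] using hu.1.1 j
  calc #P + #Q = #((P ∪ Q) ∪ (P ∩ Q).image complete) := by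
        rw [Finset.card_union_of_disjoint image_disjoint,
          Finset.card_image_of_injOn complete_injOn, Finset.card_union_add_card_inter]
    _ ≤ #(shatteredPatterns T W A) := Finset.card_le_card <| Finset.union_subset
        (Finset.union_subset (shatteredPatterns_mono (Finset.filter_subset _ _))
          (shatteredPatterns_mono (Finset.filter_subset _ _)))
        (Finset.image_subset_iff.2 complete_mem)

lemma two_pow_le_card_shatteredPatterns {θ N : ℝ} (hθ₀ : 0 < θ) (hθ₁ : θ ≤ 1) (hN : 0 ≤ N)
    (hT : ∀ t ∈ T, t.2 < t.1) (hsplit : ∀ A : Finset α, N < #A → HasBalancedSplit T W θ A)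
    (m : ℕ) : ∀ A : Finset α, θ * N < θ ^ m * #A → 2 ^ m ≤ #(shatteredPatterns T W A) := by
  induction m with
  | zero =>
    intro A hA
    have card_pos : (0 : ℝ) < #A := by
      simpa using (mul_nonneg hθ₀.le hN).trans_lt hA
    have hnone : (fun _ => none) ∈ shatteredPatterns T W A := mem_shatteredPatterns.2
      ⟨fun _ => Finset.none_mem_insertNone,
        shattersPattern_none (Finset.card_pos.1 (Nat.cast_pos.1 card_pos))⟩
    simpa using Finset.card_pos.2 ⟨_, hnone⟩
  | succ m ih =>
    intro A hA
    have card_gt : N < #A := by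
      rw [pow_succ', mul_assoc, mul_lt_mul_iff_right₀ hθ₀] at hA
      exact hA.trans_le (mul_le_of_le_one_left (Nat.cast_nonneg _) (pow_le_one₀ hθ₀.le hθ₁))
    obtain ⟨i, t, ht, hupper, hlower⟩ := hsplit A card_gt
    rw [pow_succ, mul_assoc] at hA
    have hcard := card_shatteredPatterns_add_le (W := W) (A := A) hT ht i
    have hcard_upper := ih _ (hA.trans_le (mul_le_mul_of_nonneg_left hupper (by positivity)))
    have hcard_lower := ih _ (hA.trans_le (mul_le_mul_of_nonneg_left hlower (by positivity)))
    omega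

lemma exp_le_card_shatteredPatterns [Fintype α] [Nonempty α] {θ γ : ℝ} (hθ₀ : 0 < θ)
    (hθ₁ : θ < 1) (hγ : 0 ≤ γ) (hT : ∀ t ∈ T, t.2 < t.1)
    (hsplit : ∀ A : Finset α, Real.exp (-γ) * Fintype.card α < #A → HasBalancedSplit T W θ A) :
    Real.exp (Real.log 2 / -Real.log θ * γ) ≤
      #(shatteredPatterns T W (Finset.univ : Finset α)) := by
  have hlog : 0 < -Real.log θ := neg_pos.2 (Real.log_neg hθ₀ hθ₁)
  have hα : (0 : ℝ) < Fintype.card α := Nat.cast_pos.2 Fintype.card_pos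
  set m := ⌈γ / -Real.log θ⌉₊
  have hm : θ * Real.exp (-γ) < θ ^ m := by
    have : (m : ℝ) < γ / -Real.log θ + 1 := Nat.ceil_lt_add_one (by positivity)
    calc θ * Real.exp (-γ) = θ ^ (γ / -Real.log θ + 1) := by
          rw [Real.rpow_add_one hθ₀.ne', Real.rpow_def_of_pos hθ₀, mul_comm θ]
          congr 2; field_simp [neg_ne_zero.1 hlog.ne']
      _ < θ ^ (m : ℝ) := Real.rpow_lt_rpow_of_exponent_gt hθ₀ hθ₁ this
      _ = θ ^ m := Real.rpow_natCast θ m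
  have hcard : 2 ^ m ≤ #(shatteredPatterns T W (Finset.univ : Finset α)) :=
    two_pow_le_card_shatteredPatterns hθ₀ hθ₁.le (by positivity) hT hsplit m _ <| by
      rw [← mul_assoc, Finset.card_univ]; exact mul_lt_mul_of_pos_right hm hα
  calc Real.exp (Real.log 2 / -Real.log θ * γ) = 2 ^ (γ / -Real.log θ) := by
        rw [Real.rpow_def_of_pos two_pos]; congr 1; ring
    _ ≤ 2 ^ (m : ℝ) := Real.rpow_le_rpow_of_exponent_le one_le_two (Nat.le_ceil _)
    _ ≤ #(shatteredPatterns T W (Finset.univ : Finset α)) := by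
        rw [Real.rpow_natCast]; exact_mod_cast hcard

end Shattering

theorem exists_pos_forall_exists_shattersAt {β : Type*} [LinearOrder β] {T : Finset (β × β)}
    (hT₀ : T.Nonempty) (hT : ∀ t ∈ T, t.2 < t.1) {θ γ : ℝ} (hθ₀ : 0 < θ) (hθ₁ : θ < 1)
    (hγ : 0 < γ) :
    ∃ c : ℝ, 0 < c ∧ ∀ {ι α : Type*} [Fintype ι] [Fintype α] [Nonempty α] {W : α → ι → β},
      (∀ A : Finset α, Real.exp (-(γ * Fintype.card ι)) * Fintype.card α < #A →
        HasBalancedSplit T W θ A) →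
      ∃ J : Finset ι, ∃ t ∈ T, c * Fintype.card ι ≤ #J ∧ ShattersAt W J t := by
  have hb : 0 < Real.log 2 / -Real.log θ * γ :=
    mul_pos (div_pos (Real.log_pos one_lt_two) (neg_pos.2 (Real.log_neg hθ₀ hθ₁))) hγ
  obtain ⟨c, hc, hlarge⟩ := exists_pos_forall_exists_le_card_isSome T hb
  have hcardT : (0 : ℝ) < #T := Nat.cast_pos.2 hT₀.card_pos
  refine ⟨c / #T, by positivity, fun {ι α _ _ _ W} hsplit => ?_⟩
  classical
  have hcard := exp_le_card_shatteredPatterns hθ₀ hθ₁ (by positivity) hT hsplit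
  rw [← mul_assoc] at hcard
  obtain ⟨u, hu, hsupport⟩ := hlarge (F := shatteredPatterns T W _) (Finset.filter_subset _ _) hcard
  rw [mem_shatteredPatterns, ← Fintype.mem_piFinset] at hu
  obtain ⟨t, ht, hlevel⟩ := exists_le_mul_card_eq_some hT₀ hu.1
  refine ⟨_, t, ht, ?_, hu.2.shattersAt t⟩
  rw [div_mul_eq_mul_div, div_le_iff₀' hcardT]
  exact hsupport.trans (by exact_mod_cast hlevel)

section Levels

variable {α : Type*} {A : Finset α} {f : α → ℝ} {M g η θ : ℝ}

/-- The pairs of levels `(τ + g, τ)`, where `τ` runs through `[-M, M)` in steps of `η`. -/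
noncomputable def levelGrid (M g η : ℝ) : Finset (ℝ × ℝ) :=
  (Finset.range ⌈2 * M / η⌉₊).image fun k : ℕ => (-M + k * η + g, -M + k * η)

lemma mk_mem_levelGrid (hη : 0 < η) {k : ℕ} (hk : k * η < 2 * M) :
    (-M + k * η + g, -M + k * η) ∈ levelGrid M g η :=
  Finset.mem_image_of_mem _ (Finset.mem_range.2 (Nat.lt_ceil.2 ((lt_div_iff₀ hη).2 hk)))

lemma levelGrid_nonempty (hM : 0 < M) (hη : 0 < η) : (levelGrid M g η).Nonempty :=
  ⟨_, mk_mem_levelGrid (k := 0) hη (by simpa using hM)⟩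

lemma of_mem_levelGrid (hη : 0 < η) {t : ℝ × ℝ} (ht : t ∈ levelGrid M g η) :
    t.1 = t.2 + g ∧ -M ≤ t.2 ∧ t.2 < M := by
  obtain ⟨k, hk, rfl⟩ := Finset.mem_image.1 ht
  have hkM : k * η < 2 * M := (lt_div_iff₀ hη).1 (Nat.lt_ceil.1 (Finset.mem_range.1 hk))
  have : 0 ≤ k * η := by positivity
  exact ⟨rfl, by linarith, by linarith⟩

lemma exists_grid_quantile (hM : 0 ≤ M) (hη : 0 < η) (hθ₀ : 0 ≤ θ) (hθ₁ : θ ≤ 1)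
    (hf : ∀ a ∈ A, |f a| ≤ M) :
    ∃ k : ℕ, k * η < 2 * M + η ∧ θ * #A ≤ #{a ∈ A | f a ≤ -M + k * η} ∧
      #{a ∈ A | f a ≤ -M + k * η - η} ≤ θ * #A := by
  have hlast : θ * #A ≤ #{a ∈ A | f a ≤ -M + ⌈2 * M / η⌉₊ * η} := by
    have hceil : 2 * M ≤ ⌈2 * M / η⌉₊ * η := (div_le_iff₀ hη).1 (Nat.le_ceil _)
    rw [Finset.filter_true_of_mem fun a ha => by linarith [(abs_le.1 (hf a ha)).2]]
    exact mul_le_of_le_one_left (Nat.cast_nonneg _) hθ₁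
  let reached (k : ℕ) : Prop := θ * #A ≤ #{a ∈ A | f a ≤ -M + k * η}
  classical
  obtain ⟨k, hk, hmin⟩ : ∃ k, reached k ∧ ∀ l < k, ¬ reached l :=
    ⟨Nat.find ⟨_, hlast⟩, Nat.find_spec _, fun _ => Nat.find_min _⟩
  refine ⟨k, ?_, hk, ?_⟩
  · have hkceil : k ≤ ⌈2 * M / η⌉₊ := not_lt.1 fun h => hmin _ h hlast
    have : (k : ℝ) < 2 * M / η + 1 :=
      (Nat.cast_le.2 hkceil).trans_lt (Nat.ceil_lt_add_one (by positivity))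
    rwa [← sub_lt_iff_lt_add, lt_div_iff₀ hη, sub_one_mul, sub_lt_iff_lt_add] at this
  · cases k with
    | zero =>
      rw [Finset.filter_false_of_mem fun a ha => by
        push_cast; linarith [(abs_le.1 (hf a ha)).1]]
      simpa using mul_nonneg hθ₀ (Nat.cast_nonneg _)
    | succ l =>
      rw [show -M + ((l + 1 : ℕ) : ℝ) * η - η = -M + l * η by push_cast; ring]
      exact (not_le.1 (hmin l l.lt_succ_self)).le

lemma exists_level_or_concentrated (hA : A.Nonempty) (hM : 0 ≤ M) (hg : 0 < g) (hη : 0 < η)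
    (hθ₀ : 0 < θ) (hθ₁ : θ ≤ 1) (hf : ∀ a ∈ A, |f a| ≤ M) :
    (∃ t ∈ levelGrid M g η, θ * #A ≤ #{a ∈ A | t.1 ≤ f a} ∧ θ * #A ≤ #{a ∈ A | f a ≤ t.2}) ∨
      ∃ c : ℝ, |c| ≤ M + (g + η) / 2 ∧ #{a ∈ A | (g + η) / 2 < |f a - c|} ≤ 2 * θ * #A := by
  classical
  obtain ⟨k, hkM, hlower, hbelow⟩ := exists_grid_quantile hM hη hθ₀.le hθ₁ hf
  have hk₀ : 0 ≤ k * η := by positivity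
  set τ := -M + k * η with hτ
  by_cases hupper : θ * #A ≤ #{a ∈ A | τ + g ≤ f a}
  · refine Or.inl ⟨_, mk_mem_levelGrid hη ?_, hupper, hlower⟩
    have hpos : (0 : ℝ) < θ * #A := mul_pos hθ₀ (Nat.cast_pos.2 hA.card_pos)
    obtain ⟨a, ha⟩ := Finset.card_pos.1 (Nat.cast_pos.1 (hpos.trans_le hupper))
    rw [Finset.mem_filter] at ha
    linarith [(abs_le.1 (hf a ha.1)).2, hτ]
  · -- Most values lie between `τ - η` and `τ + g`; take the midpoint.
    refine Or.inr ⟨τ + (g - η) / 2, abs_le.2 ⟨by linarith, by linarith⟩, ?_⟩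
    have hsub : {a ∈ A | (g + η) / 2 < |f a - (τ + (g - η) / 2)|} ⊆
        {a ∈ A | τ + g ≤ f a} ∪ {a ∈ A | f a ≤ τ - η} := fun a ha => by
      rw [← Finset.filter_or, Finset.mem_filter]
      obtain ⟨haA, ha⟩ := Finset.mem_filter.1 ha
      exact ⟨haA, (lt_abs.1 ha).imp (fun _ => by linarith) (fun _ => by linarith)⟩
    have hcard : (#{a ∈ A | (g + η) / 2 < |f a - (τ + (g - η) / 2)|} : ℝ) ≤
        #{a ∈ A | τ + g ≤ f a} + #{a ∈ A | f a ≤ τ - η} := by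
      exact_mod_cast (Finset.card_le_card hsub).trans (Finset.card_union_le _ _)
    linarith

lemma sum_le_of_card_filter_lt_le {r B ρ : ℝ} (hr : 0 ≤ r) (hB₀ : 0 ≤ B) (hB : ∀ a ∈ A, f a ≤ B)
    (hρ : #{a ∈ A | r < f a} ≤ ρ * #A) : ∑ a ∈ A, f a ≤ (r + B * ρ) * #A := by
  have hpoint : ∀ a ∈ A, f a ≤ r + B * if r < f a then 1 else 0 := fun a ha => by
    split_ifs with h
    · linarith [hB a ha]
    · linarith
  calc ∑ a ∈ A, f a ≤ ∑ a ∈ A, (r + B * if r < f a then 1 else 0) := Finset.sum_le_sum hpoint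
    _ = r * #A + B * #{a ∈ A | r < f a} := by
      rw [Finset.sum_add_distrib, ← Finset.mul_sum, Finset.sum_boole, Finset.sum_const,
        nsmul_eq_mul, mul_comm r]
    _ ≤ r * #A + B * (ρ * #A) := by gcongr
    _ = (r + B * ρ) * #A := by ring

lemma exists_level_or_sum_abs_sub_le (hA : A.Nonempty) (hM : 0 ≤ M) (hg : 0 < g) (hη : 0 < η)
    (hθ₀ : 0 < θ) (hθ₁ : θ ≤ 1) (hf : ∀ a ∈ A, |f a| ≤ M) :
    (∃ t ∈ levelGrid M g η, θ * #A ≤ #{a ∈ A | t.1 ≤ f a} ∧ θ * #A ≤ #{a ∈ A | f a ≤ t.2}) ∨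
      ∃ c : ℝ, |c| ≤ M + (g + η) / 2 ∧
        ∑ a ∈ A, |f a - c| ≤ ((g + η) / 2 + (2 * M + (g + η) / 2) * (2 * θ)) * #A := by
  refine (exists_level_or_concentrated hA hM hg hη hθ₀ hθ₁ hf).imp_right ?_
  rintro ⟨c, hc, hcard⟩
  refine ⟨c, hc, sum_le_of_card_filter_lt_le (by positivity) (by positivity) (fun a ha => ?_) hcard⟩
  linarith [abs_sub (f a) c, hf a ha]

end Levels

section BoundedFamilies

variable {ι : Type*} [Fintype ι]

lemma sub_mul_card_le_sum_sum_units_smul {A : Finset (ι → ℤˣ)} {W : (ι → ℤˣ) → ι → ℝ}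
    {c : ι → ℝ} {a b : ℝ} (ha : ∀ ε ∈ A, a ≤ ∑ i, ε i • W ε i)
    (hb : ∀ i, ∑ ε ∈ A, |W ε i - c i| ≤ b * #A) :
    (a - Fintype.card ι * b) * #A ≤ ∑ ε ∈ A, ∑ i, ε i • c i := by
  have hdeviation : ∑ ε ∈ A, ∑ i, |W ε i - c i| ≤ Fintype.card ι * b * #A := by
    rw [Finset.sum_comm]
    simpa [mul_assoc] using Finset.sum_le_card_nsmul Finset.univ _ _ fun i _ => hb i
  calc (a - Fintype.card ι * b) * #A = ∑ _ε ∈ A, a - Fintype.card ι * b * #A := by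
        rw [Finset.sum_const, nsmul_eq_mul]; ring
    _ ≤ ∑ ε ∈ A, ∑ i, ε i • W ε i - ∑ ε ∈ A, ∑ i, |W ε i - c i| :=
        sub_le_sub (Finset.sum_le_sum ha) hdeviation
    _ ≤ ∑ ε ∈ A, ∑ i, ε i • c i := by
        rw [← Finset.sum_sub_distrib]
        exact Finset.sum_le_sum fun ε _ => sum_units_smul_sub_sum_abs_sub_le ε _ _

lemma card_le_exp_mul_card_of_abs_le [DecidableEq ι] {A : Finset (ι → ℤˣ)} {c : ι → ℝ}
    {C s : ℝ} (hC : 0 < C) (hs : 0 ≤ s) (hc : ∀ i, |c i| ≤ C)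
    (h : s * Fintype.card ι * #A ≤ ∑ ε ∈ A, ∑ i, ε i • c i) :
    #A ≤ Real.exp (-(s ^ 2 / (2 * C ^ 2) * Fintype.card ι)) * Fintype.card (ι → ℤˣ) := by
  set n : ℝ := (Fintype.card ι : ℝ)
  -- The Chernoff bound is optimised by the scaling factor `s / C ^ 2`.
  set l : ℝ := s / C ^ 2
  have hscaled : l * (s * n) * #A ≤ ∑ ε ∈ A, ∑ i, ε i • (l * c i) := by
    have smul_mul (ε : ι → ℤˣ) (i : ι) : ε i • (l * c i) = l * ε i • c i :=
      (mul_smul_comm (ε i) l (c i)).symm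
    simp_rw [smul_mul, ← Finset.mul_sum, mul_assoc l]
    gcongr
  have hsq : ∑ i, (l * c i) ^ 2 ≤ n * (l * C) ^ 2 := by
    have hpoint : ∀ i ∈ Finset.univ, (l * c i) ^ 2 ≤ (l * C) ^ 2 := fun i _ => by
      rw [mul_pow, mul_pow, ← sq_abs (c i)]
      gcongr
      exact hc i
    simpa using Finset.sum_le_card_nsmul Finset.univ _ _ hpoint
  calc (#A : ℝ) ≤ 2 ^ Fintype.card ι * Real.exp ((∑ i, (l * c i) ^ 2) / 2 - l * (s * n)) :=
        card_le_two_pow_mul_exp hscaled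
    _ ≤ 2 ^ Fintype.card ι * Real.exp (n * (l * C) ^ 2 / 2 - l * (s * n)) := by gcongr
    _ = Real.exp (-(s ^ 2 / (2 * C ^ 2) * n)) * Fintype.card (ι → ℤˣ) := by
        rw [Fintype.card_fun, Fintype.card_units_int, mul_comm]
        push_cast
        congr 2
        simp only [l]
        field_simp
        ring

-- The budget is `g / 2 + 3 * s = (g / 2 + s) + s + s`: the half-width of the window around the
-- constant `c i`, the contribution of the values outside it, and the slack that makes sign vectors
-- correlated with `c` exponentially rare.
lemma hasBalancedSplit_levelGrid [DecidableEq ι] {W : (ι → ℤˣ) → ι → ℝ} {M g s : ℝ} (hM : 0 < M)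
    (hg : 0 < g) (hs : 0 < s) (hW : ∀ ε i, |W ε i| ≤ M)
    (hsum : ∀ ε, (g / 2 + 3 * s) * Fintype.card ι ≤ ∑ i, ε i • W ε i) {A : Finset (ι → ℤˣ)}
    (hA : Real.exp (-(s ^ 2 / (2 * (M + (g + 2 * s) / 2) ^ 2) * Fintype.card ι)) *
      Fintype.card (ι → ℤˣ) < #A) :
    HasBalancedSplit (levelGrid M g (2 * s)) W (s / (4 * M + g + 2 * s)) A := by
  set θ := s / (4 * M + g + 2 * s) with hθ
  have hA₀ : A.Nonempty :=
    Finset.card_pos.1 (Nat.cast_pos.1 (lt_of_le_of_lt (by positivity) hA))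
  have hθ₁ : θ ≤ 1 := (div_le_one (by positivity)).2 (by linarith)
  by_contra hsplit
  have hconcentrated (i : ι) : ∃ c : ℝ, |c| ≤ M + (g + 2 * s) / 2 ∧
      ∑ ε ∈ A, |W ε i - c| ≤ (g / 2 + 2 * s) * #A := by
    obtain hlevel | ⟨c, hc, hdeviation⟩ := exists_level_or_sum_abs_sub_le (f := (W · i)) hA₀ hM.le
      hg (mul_pos two_pos hs) (by positivity) hθ₁ fun ε _ => hW ε i
    · exact absurd ⟨i, hlevel⟩ hsplit
    · refine ⟨c, hc, hdeviation.trans_eq ?_⟩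
      rw [hθ]
      field_simp
      ring
  choose c hc hdeviation using hconcentrated
  have hcorrelation := sub_mul_card_le_sum_sum_units_smul (fun ε _ => hsum ε) hdeviation
  refine hA.not_ge (card_le_exp_mul_card_of_abs_le (by positivity) hs.le hc ?_)
  exact le_of_eq_of_le (by ring) hcorrelation

end BoundedFamilies

theorem exists_pos_forall_exists_shattersAt_levelGrid {M g s : ℝ} (hM : 0 < M) (hg : 0 < g)
    (hs : 0 < s) :
    ∃ c : ℝ, 0 < c ∧ ∀ {ι : Type*} [Fintype ι] {W : (ι → ℤˣ) → ι → ℝ}, (∀ ε i, |W ε i| ≤ M) →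
      (∀ ε, (g / 2 + 3 * s) * Fintype.card ι ≤ ∑ i, ε i • W ε i) →
      ∃ J : Finset ι, ∃ t ∈ levelGrid M g (2 * s),
        c * Fintype.card ι ≤ #J ∧ ShattersAt W J t := by
  have hη : 0 < 2 * s := mul_pos two_pos hs
  obtain ⟨c, hc, hshatter⟩ := exists_pos_forall_exists_shattersAt
    (levelGrid_nonempty (g := g) hM hη) (fun t ht => by linarith [(of_mem_levelGrid hη ht).1])
    (θ := s / (4 * M + g + 2 * s)) (γ := s ^ 2 / (2 * (M + (g + 2 * s) / 2) ^ 2))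
    (by positivity) ((div_lt_one (by positivity)).2 (by linarith)) (by positivity)
  refine ⟨c, hc, fun {ι _ W} hW hsum => ?_⟩
  classical
  exact hshatter fun A hA => hasBalancedSplit_levelGrid hM hg hs hW hsum hA

section Clip

variable {M t w : ℝ}

/-- The point of `[-M, M]` nearest to `w`. -/
noncomputable def clip (M w : ℝ) : ℝ := max (-M) (min M w)

lemma abs_clip_le (hM : 0 ≤ M) : |clip M w| ≤ M :=
  abs_le.2 ⟨le_max_left _ _, max_le (neg_le_self hM) (min_le_left _ _)⟩

lemma clip_of_abs_le (hw : |w| ≤ M) : clip M w = w := by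
  rw [clip, min_eq_right (abs_le.1 hw).2, max_eq_right (abs_le.1 hw).1]

lemma le_of_le_clip (ht : -M < t) (h : t ≤ clip M w) : t ≤ w :=
  ((le_max_iff.1 h).resolve_left ht.not_ge).trans (min_le_right _ _)

lemma le_of_clip_le (ht : t < M) (h : clip M w ≤ t) : w ≤ t :=
  (min_le_iff.1 ((le_max_right _ _).trans h)).resolve_left ht.not_ge

lemma ShattersAt.of_clip {α ι : Type*} {W : α → ι → ℝ} {J : Finset ι} {t : ℝ × ℝ}
    (h : ShattersAt (fun a i => clip M (W a i)) J t) (ht₁ : -M < t.1) (ht₂ : t.2 < M) :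
    ShattersAt W J t := fun σ =>
  let ⟨a, ha⟩ := h σ
  ⟨a, fun j hj => ⟨fun hσ => le_of_le_clip ht₁ ((ha j hj).1 hσ),
    fun hσ => le_of_clip_le ht₂ ((ha j hj).2 hσ)⟩⟩

lemma abs_sub_clip_le (hM : 0 ≤ M) : |w - clip M w| ≤ |w| := by
  unfold clip
  grind

lemma abs_sub_clip_le_rpow {q : ℝ} (hM : 0 < M) (hq : 1 ≤ q) :
    |w - clip M w| ≤ M ^ (1 - q) * |w| ^ q := by
  obtain hw | hw := le_or_gt |w| M
  · rw [clip_of_abs_le hw, sub_self, abs_zero]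
    positivity
  · calc |w - clip M w| ≤ |w| := abs_sub_clip_le hM.le
      _ = |w| ^ (1 - q) * |w| ^ q := by rw [← Real.rpow_add (hM.trans hw)]; simp
      _ ≤ M ^ (1 - q) * |w| ^ q := by
        exact mul_le_mul_of_nonneg_right (Real.rpow_le_rpow_of_nonpos hM hw.le (by linarith))
          (by positivity)

end Clip

section FlatCoord

variable {p : ℝ≥0∞} {ι : Type*} [Fintype ι]

/-- The modulus of the coordinates of the multiples of sign vectors that have norm one in `ℓ_p^ι`,
that is `n ^ (-1 / p)` with `n` the number of coordinates; it is `1` for `p = ∞`. -/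
noncomputable def flatCoord (p : ℝ≥0∞) (ι : Type*) [Fintype ι] : ℝ :=
  (Fintype.card ι : ℝ) ^ (-(1 / p).toReal)

lemma flatCoord_pos [Nonempty ι] : 0 < flatCoord p ι :=
  Real.rpow_pos_of_pos (Nat.cast_pos.2 Fintype.card_pos) _

lemma flatCoord_top : flatCoord ∞ ι = 1 := by
  simp [flatCoord]

lemma flatCoord_rpow_toReal (hp : 0 < p.toReal) :
    flatCoord p ι ^ p.toReal = (Fintype.card ι : ℝ)⁻¹ := by
  rw [flatCoord, ← Real.rpow_mul (Nat.cast_nonneg _), ← Real.rpow_neg_one, one_div,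
    ENNReal.toReal_inv, neg_mul, inv_mul_cancel₀ hp.ne']

lemma sum_abs_div_flatCoord_rpow_le [Nonempty ι] (hp : 0 < p.toReal)
    {v : PiLp p fun _ : ι => ℝ} (hv : ‖v‖ ≤ 1) :
    ∑ i, |v i / flatCoord p ι| ^ p.toReal ≤ Fintype.card ι := by
  have hsum : ∑ i, |v i| ^ p.toReal ≤ 1 := by
    rwa [PiLp.norm_eq_sum hp, one_div, Real.rpow_inv_le_iff_of_pos (by positivity) zero_le_one hp,
      Real.one_rpow] at hv
  have hflat (i : ι) :
      |v i / flatCoord p ι| ^ p.toReal = Fintype.card ι * |v i| ^ p.toReal := by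
    rw [abs_div, abs_of_pos flatCoord_pos, Real.div_rpow (abs_nonneg _) flatCoord_pos.le,
      flatCoord_rpow_toReal hp, div_inv_eq_mul, mul_comm]
  simp_rw [hflat, ← Finset.mul_sum]
  exact mul_le_of_le_one_right (Nat.cast_nonneg _) hsum

variable [Fact (1 ≤ p)]

lemma norm_toLp_units_smul (ε : ι → ℤˣ) (a : ℝ) :
    ‖WithLp.toLp p fun i => ε i • a‖ = ‖WithLp.toLp p (Function.const ι a)‖ := by
  obtain rfl | hp := p.dichotomy
  · simp [PiLp.norm_eq_ciSup]
  · have hp₀ : 0 < p.toReal := one_pos.trans_le hp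
    simp [PiLp.norm_eq_sum hp₀]

lemma norm_toLp_units_smul_mul_flatCoord [Nonempty ι] (ε : ι → ℤˣ) {δ : ℝ} (hδ : 0 ≤ δ) :
    ‖WithLp.toLp p fun i => ε i • (δ * flatCoord p ι)‖ = δ := by
  have hn : (0 : ℝ) < Fintype.card ι := Nat.cast_pos.2 Fintype.card_pos
  rw [norm_toLp_units_smul, PiLp.norm_toLp_const', Real.norm_of_nonneg
    (mul_nonneg hδ flatCoord_pos.le), flatCoord, Real.rpow_neg hn.le,
    NNReal.coe_natCast]
  field_simp

theorem exists_forall_sum_abs_sub_clip_le (hp : 1 < p) {s : ℝ} (hs : 0 < s) :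
    ∃ M : ℝ, 0 < M ∧ ∀ {ι : Type*} [Fintype ι] [Nonempty ι] {v : PiLp p fun _ : ι => ℝ},
      ‖v‖ ≤ 1 → ∑ i, |v i / flatCoord p ι - clip M (v i / flatCoord p ι)| ≤
        s * Fintype.card ι := by
  obtain rfl | hp_top := eq_or_ne p ∞
  · refine ⟨1, one_pos, fun {ι _ _ v} hv => ?_⟩
    have hclip (i : ι) : clip 1 (v i) = v i := clip_of_abs_le ((PiLp.norm_apply_le v i).trans hv)
    simp only [flatCoord_top, div_one, hclip, sub_self, abs_zero, Finset.sum_const_zero]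
    positivity
  · have hq : 1 < p.toReal := by
      simpa using (ENNReal.toReal_lt_toReal ENNReal.one_ne_top hp_top).2 hp
    have htendsto : Filter.Tendsto (fun M : ℝ => M ^ (1 - p.toReal)) Filter.atTop (nhds 0) := by
      simpa using tendsto_rpow_neg_atTop (sub_pos.2 hq)
    obtain ⟨M, hMs, hM⟩ :=
      ((htendsto.eventually_le_const hs).and (Filter.eventually_gt_atTop 0)).exists
    refine ⟨M, hM, fun {ι _ _ v} hv => ?_⟩
    calc ∑ i, |v i / flatCoord p ι - clip M (v i / flatCoord p ι)|
        ≤ ∑ i, M ^ (1 - p.toReal) * |v i / flatCoord p ι| ^ p.toReal :=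
          Finset.sum_le_sum fun i _ => abs_sub_clip_le_rpow hM hq.le
      _ = M ^ (1 - p.toReal) * ∑ i, |v i / flatCoord p ι| ^ p.toReal := by rw [Finset.mul_sum]
      _ ≤ s * Fintype.card ι := by
          gcongr
          exact sum_abs_div_flatCoord_rpow_le (one_pos.trans hq) hv

end FlatCoord

section ConvexHull

lemma exists_mem_le_of_mem_convexHull_union_zero {F : Type*} [AddCommGroup F] [Module ℝ F]
    {E : Set F} {y : F} (hy : y ∈ convexHull ℝ (E ∪ {0})) (φ : F →ₗ[ℝ] ℝ) (hφ : 0 < φ y) :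
    ∃ v ∈ E, φ y ≤ φ v := by
  obtain ⟨v, hv | rfl, hle⟩ :=
    (φ.convexOn convex_univ).exists_ge_of_mem_convexHull (Set.subset_univ _) hy
  · exact ⟨v, hv, hle⟩
  · exact absurd hle (by simpa using hφ)

lemma exists_mem_le_sum_units_smul {p : ℝ≥0∞} [Fact (1 ≤ p)] {ι : Type*} [Fintype ι] [Nonempty ι]
    {δ : ℝ} (hδ : 0 < δ) {E : Set (PiLp p fun _ : ι => ℝ)}
    (hE : Metric.closedBall 0 δ ⊆ convexHull ℝ (E ∪ {0})) (ε : ι → ℤˣ) :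
    ∃ v ∈ E, δ * Fintype.card ι ≤ ∑ i, ε i • (v i / flatCoord p ι) := by
  have hflat : 0 < flatCoord p ι := flatCoord_pos
  let y : PiLp p fun _ : ι => ℝ := WithLp.toLp p fun i => ε i • (δ * flatCoord p ι)
  let φ : PiLp p (fun _ : ι => ℝ) →ₗ[ℝ] ℝ := ∑ i, ε i • PiLp.projₗ p (fun _ : ι => ℝ) i
  have φ_apply (x : PiLp p fun _ : ι => ℝ) : φ x = ∑ i, ε i • x i := by simp [φ]
  have φ_y : φ y = δ * Fintype.card ι * flatCoord p ι := by
    simp [φ_apply, y, smul_smul]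
    ring
  have hy : y ∈ Metric.closedBall 0 δ :=
    mem_closedBall_zero_iff.2 (norm_toLp_units_smul_mul_flatCoord ε hδ.le).le
  obtain ⟨v, hv, hle⟩ := exists_mem_le_of_mem_convexHull_union_zero (hE hy) φ
    (by rw [φ_y]; positivity)
  refine ⟨v, hv, ?_⟩
  simp_rw [div_eq_mul_inv, ← smul_mul_assoc, ← Finset.sum_mul, ← φ_apply]
  rwa [← div_eq_mul_inv, le_div_iff₀ hflat, ← φ_y]

end ConvexHull

section UnitBall

variable {p : ℝ≥0∞} [Fact (1 ≤ p)]

theorem exists_pos_forall_exists_shattersAt_div_flatCoord (hp : 1 < p) {δ g : ℝ} (hg₀ : 0 < g)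
    (hg : g < 2 * δ) :
    ∃ (T : Finset (ℝ × ℝ)) (c : ℝ), 0 < c ∧ (∀ t ∈ T, t.2 + g ≤ t.1) ∧
      ∀ {ι : Type*} [Fintype ι] [Nonempty ι] {v : (ι → ℤˣ) → PiLp p fun _ : ι => ℝ},
        (∀ ε, ‖v ε‖ ≤ 1) → (∀ ε, δ * Fintype.card ι ≤ ∑ i, ε i • (v ε i / flatCoord p ι)) →
        ∃ J : Finset ι, ∃ t ∈ T, c * Fintype.card ι ≤ #J ∧
          ShattersAt (fun ε i => v ε i / flatCoord p ι) J t := by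
  obtain ⟨s, hs, hgs⟩ : ∃ s > 0, g / 2 + 4 * s = δ := ⟨(2 * δ - g) / 8, by linarith, by ring⟩
  have hη : 0 < 2 * s := mul_pos two_pos hs
  obtain ⟨M, hM, hclip⟩ := exists_forall_sum_abs_sub_clip_le hp hs
  obtain ⟨c, hc, hshatter⟩ := exists_pos_forall_exists_shattersAt_levelGrid hM hg₀ hs
  refine ⟨levelGrid M g (2 * s), c, hc, fun t ht => (of_mem_levelGrid hη ht).1.ge,
    fun {ι _ _ v} hv hsum => ?_⟩
  have hclipped (ε : ι → ℤˣ) : (g / 2 + 3 * s) * Fintype.card ι ≤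
      ∑ i, ε i • clip M (v ε i / flatCoord p ι) := by
    refine le_trans ?_ (sum_units_smul_sub_sum_abs_sub_le ε (fun i => v ε i / flatCoord p ι) _)
    linear_combination hsum ε + hclip (hv ε) + Fintype.card ι * hgs
  obtain ⟨J, t, ht, hJ, hJt⟩ := hshatter (fun _ _ => abs_clip_le hM.le) hclipped
  obtain ⟨ht₁₂, htM, hMt⟩ := of_mem_levelGrid hη ht
  exact ⟨J, t, ht, hJ, hJt.of_clip (by linarith) hMt⟩

end UnitBall

end SignSelection

open SignSelection in
theorem flm_selection_general {δ g : ℝ} (hg₀ : 0 < g) (hg : g < 2 * δ) (p : ℝ≥0∞)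
    [Fact (1 ≤ p)] (hp : 1 < p) :
    ∃ (T : Finset (ℝ × ℝ)) (c' : ℝ), 0 < c' ∧
      (∀ t ∈ T, t.2 + g ≤ t.1) ∧
      ∀ (ι : Type*) [Fintype ι] [Nonempty ι] (E : Set (PiLp p (fun _ : ι => ℝ))),
        E ⊆ Metric.closedBall 0 1 →
        Metric.closedBall 0 δ ⊆ convexHull ℝ (E ∪ {0}) →
        ∃ J : Finset ι, ∃ t ∈ T, c' * (Fintype.card ι : ℝ) ≤ J.card ∧
          ∀ σ : ι → Fin 2, ∃ v ∈ E,
            (∀ j ∈ J, σ j = 0 → t.1 * (Fintype.card ι : ℝ) ^ (-(1 / p).toReal) ≤ v j) ∧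
            (∀ j ∈ J, σ j = 1 → v j ≤ t.2 * (Fintype.card ι : ℝ) ^ (-(1 / p).toReal)) := by
  obtain ⟨T, c', hc', hT, hshatter⟩ :=
    exists_pos_forall_exists_shattersAt_div_flatCoord hp hg₀ hg
  refine ⟨T, c', hc', hT, fun ι _ _ E hE₁ hEδ => ?_⟩
  choose v hvE hv using exists_mem_le_sum_units_smul (by linarith : 0 < δ) hEδ
  obtain ⟨J, t, ht, hJ, hJt⟩ := hshatter (fun ε => mem_closedBall_zero_iff.1 (hE₁ (hvE ε))) hv
  refine ⟨J, t, ht, hJ, fun σ => ?_⟩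
  obtain ⟨ε, hε⟩ := hJt σ
  exact ⟨v ε, hvE ε, fun j hj hσ => (le_div_iff₀ flatCoord_pos).1 ((hε j hj).1 hσ),
    fun j hj hσ => (div_le_iff₀ flatCoord_pos).1 ((hε j hj).2 hσ)⟩

theorem flm_selection (δ : ℝ) (hδ₁ : 0 < δ) (hδ₂ : δ ≤ 1) (p : ℝ≥0∞) [Fact (1 ≤ p)]
    (hp : 1 < p) :
    ∃ (T : Finset (ℝ × ℝ)) (c' : ℝ), 0 < c' ∧
      (∀ t ∈ T, t.2 + δ ≤ t.1) ∧
      ∀ n : ℕ, 1 ≤ n → ∀ E : Set (PiLp p (fun _ : Fin n => ℝ)),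
        E ⊆ Metric.closedBall 0 1 →
        Metric.closedBall 0 δ ⊆ convexHull ℝ (E ∪ {0}) →
        ∃ J : Finset (Fin n), ∃ t ∈ T, c' * (n : ℝ) ≤ J.card ∧
          ∀ σ : Fin n → Fin 2, ∃ v ∈ E,
            (∀ j ∈ J, σ j = 0 → t.1 * (n : ℝ) ^ (-(1 / p).toReal) ≤ v j) ∧
            (∀ j ∈ J, σ j = 1 → v j ≤ t.2 * (n : ℝ) ^ (-(1 / p).toReal)) := by
  obtain ⟨T, c', hc', hT, h⟩ := flm_selection_general hδ₁ (by linarith : δ < 2 * δ) p hp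
  refine ⟨T, c', hc', hT, fun n hn E => ?_⟩
  have : Nonempty (Fin n) := Fin.pos_iff_nonempty.1 hn
  simpa only [Fintype.card_fin] using h (Fin n) E
end

section
/- Let k ∈ ℕ and 0 < r < R ≤ C, and let 1 < p ≤ ∞, 1 ≤ q < ∞ with 1/p + 1/q = 1. Then there exist c, N > 0 and a finite set T ⊆ ℝ^k, depending only on k, r, R, C, p, such that: (1) (1/k)·Σ_{j=1}^k t_j ≥ r for every (t₁,...,t_k) ∈ T; and (2) for any finite set Z with |Z| ≥ N, if for each equidistributed map ψ : Z → {1,...,k} one chooses f_ψ : Z → ℝ with ‖f_ψ‖_p ≤ C and (1/|Z|^{1/q})·Σ_{z∈Z} f_ψ(z) ≥ R, then there exist J ⊆ Z with |J| ≥ c|Z| and (t₁,...,t_k) ∈ T such that every map σ : J → {1,...,k} extends to an equidistributed ψ : Z → {1,...,k} with f_ψ(z) ≥ t_j |Z|^{−1/p} for all j and all z ∈ σ⁻¹(j). -/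
open scoped ENNReal

/-- The `ℓ_p`-norm of a function on a finite set, `1 ≤ p ≤ ∞`. -/
noncomputable def lpNorm (p : ℝ≥0∞) {Z : Type*} [Fintype Z] (f : Z → ℝ) : ℝ :=
  if p = ⊤ then ⨆ z, |f z| else (∑ z, |f z| ^ p.toReal) ^ (1 / p.toReal)

/-!
Rescale `f ψ` by `|Z| ^ (1 / p)`, so that its average is at least `R`. Since `p > 1`, the bound on
`‖f ψ‖_p` makes the part above a large constant contribute arbitrarily little to the average, so
`f ψ` may be truncated, shifted by a constant and rounded down to a function `ℓ ψ` with finitely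
many levels `0, …, m`. The shift is taken so large that the average level `ρ` satisfies
`(k - 1) m < k ρ`, which leaves no room for a zero entry in a pattern `t` with `∑ t_j ≥ k ρ`.

Encode a pair (equidistributed `ψ`, level function below `ℓ ψ`) as a word indexed by `Z` in the
alphabet `Fin k × Fin (m + 1)`, weighted so that each `ψ` carries total weight `e ^ (l ∑ ℓ ψ)`.
Equidistributed maps make up all but a polynomial factor of the `k ^ |Z|` maps, so the total weight
is at least `(k e ^ (l ρ)) ^ |Z|` up to a polynomial factor. On the other hand, a set of letters
that contains no `{(1, t₁), …, (k, t_k)}` with `∑ t_j ≥ k ρ` has weight at most some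
`κ < k e ^ (l ρ)` once `l` is small, as one sees by differentiating at `l = 0`. A weighted Pajor
inequality bounds the total weight by a sum over shattered partial choices of such patterns, and
were these all supported on few coordinates, the sum would be below `(k e ^ (l ρ)) ^ |Z|` by an
exponential factor. So some choice on a positive proportion of `Z` is shattered, and the set where
its most popular pattern `t` is chosen is `J`.
-/

section Shattering

variable {A B T ι : Type*}

/-- A partial choice `ρ` of patterns (`ρ i = none` leaves the coordinate `i` free) is shattered by
`F` if, on the coordinates where `ρ` is defined, the members of `F` realise every independent choice
of entries of the prescribed patterns. For `A = B = Bool`, `T = Unit` and `pat _ = id` this is the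
usual shattering of the set of coordinates where `ρ` is defined. -/
def IsShattered (pat : T → B → A) (F : Finset (ι → A)) (ρ : ι → Option T) : Prop :=
  ∀ σ : ι → B, ∃ x ∈ F, ∀ i, ∀ t ∈ ρ i, x i = pat t (σ i)

theorem isShattered_map_arrowCongr {κ : Type*} (pat : T → B → A) (e : ι ≃ κ)
    (F : Finset (ι → A)) (ρ : ι → Option T) :
    IsShattered pat (F.map (e.arrowCongr (Equiv.refl A)).toEmbedding) (ρ ∘ e.symm) ↔
      IsShattered pat F ρ := by
  constructor
  · intro h σ
    obtain ⟨y, hy, hyρ⟩ := h (σ ∘ e.symm)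
    obtain ⟨x, hx, rfl⟩ := Finset.mem_map.1 hy
    exact ⟨x, hx, fun i => by simpa using hyρ (e i)⟩
  · intro h σ
    obtain ⟨x, hx, hxρ⟩ := h (σ ∘ e)
    exact ⟨_, Finset.mem_map_of_mem _ hx, fun i => by simpa using hxρ (e.symm i)⟩

variable [Fintype A]

open scoped Classical in
/-- The link of a pattern in coordinate `0`: the tails all of whose extensions by entries of the
pattern lie in `F`. The link of `none` is the projection of `F` onto the remaining coordinates. -/
noncomputable def patternLink (pat : T → B → A) {n : ℕ} (F : Finset (Fin (n + 1) → A)) :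
    Option T → Finset (Fin n → A)
  | none => {x | ∃ a, (Fin.cons a x : Fin (n + 1) → A) ∈ F}
  | some t => {x | ∀ b, (Fin.cons (pat t b) x : Fin (n + 1) → A) ∈ F}

theorem IsShattered.cons {pat : T → B → A} {n : ℕ} {F : Finset (Fin (n + 1) → A)}
    {o : Option T} {ρ : Fin n → Option T} (h : IsShattered pat (patternLink pat F o) ρ) :
    IsShattered pat F (Fin.cons o ρ) := by
  classical
  intro σ
  obtain ⟨x, hx, hxρ⟩ := h (Fin.tail σ)
  cases o with
  | none =>
    obtain ⟨a, ha⟩ := (Finset.mem_filter.1 hx).2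
    exact ⟨_, ha, Fin.cases (by simp) hxρ⟩
  | some t =>
    exact ⟨_, (Finset.mem_filter.1 hx).2 (σ 0), Fin.cases (by simp) hxρ⟩

theorem sum_prod_eq_sum_sum_cons_mem [DecidableEq A] {n : ℕ} (ν : A → ℝ)
    (F : Finset (Fin (n + 1) → A)) :
    ∑ x ∈ F, ∏ i, ν (x i) =
      ∑ x : Fin n → A, (∑ a with (Fin.cons a x : Fin (n + 1) → A) ∈ F, ν a) * ∏ i, ν (x i) := by
  rw [← Finset.filter_univ_mem F, Finset.sum_filter, ← (Fin.consEquiv fun _ => A).sum_comp,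
    Fintype.sum_prod_type_right]
  simp [Fin.consEquiv, Fin.prod_univ_succ, Finset.sum_mul, Finset.sum_filter]

variable [Fintype T] {pat : T → B → A} {ν : A → ℝ} {κ K : ℝ}

open scoped Classical in
theorem sum_cons_mem_le_sum_patternLink
    (hκ : ∀ D : Finset A, (∀ t, ∃ b, pat t b ∉ D) → ∑ a ∈ D, ν a ≤ κ) (hκ0 : 0 ≤ κ)
    (hν : ∀ a, 0 ≤ ν a) (hK : ∑ a, ν a ≤ κ + K) (hK0 : 0 ≤ K)
    {n : ℕ} (F : Finset (Fin (n + 1) → A)) (x : Fin n → A) :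
    ∑ a with (Fin.cons a x : Fin (n + 1) → A) ∈ F, ν a ≤
      ∑ o : Option T, if x ∈ patternLink pat F o then o.elim κ fun _ => K else 0 := by
  set D : Finset A := {a | (Fin.cons a x : Fin (n + 1) → A) ∈ F}
  have hsome0 (t : T) : 0 ≤ if x ∈ patternLink pat F (some t) then K else 0 := by
    split_ifs <;> simp [hK0]
  rcases D.eq_empty_or_nonempty with hD | ⟨a, ha⟩
  · rw [hD, Finset.sum_empty]
    refine Finset.sum_nonneg fun o _ => ?_
    cases o with
    | none => split_ifs <;> simp [hκ0]
    | some t => exact hsome0 t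
  have hnone : x ∈ patternLink pat F none := by simpa [patternLink] using ⟨a, by simpa [D] using ha⟩
  rw [Fintype.sum_option, if_pos hnone]
  by_cases hpat : ∃ t, ∀ b, pat t b ∈ D
  · obtain ⟨t, ht⟩ := hpat
    have hsome : x ∈ patternLink pat F (some t) := by simpa [D, patternLink] using ht
    calc ∑ a ∈ D, ν a ≤ ∑ a, ν a := Finset.sum_le_univ_sum_of_nonneg hν
      _ ≤ κ + K := hK
      _ = κ + if x ∈ patternLink pat F (some t) then K else 0 := by rw [if_pos hsome]
      _ ≤ _ := add_le_add le_rfl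
          (Finset.single_le_sum (fun t _ => hsome0 t) (Finset.mem_univ t))
  · push Not at hpat
    exact (hκ D hpat).trans (le_add_of_nonneg_right (Finset.sum_nonneg fun t _ => hsome0 t))

open scoped Classical in
theorem sum_prod_le_sum_shattered_fin
    (hκ : ∀ D : Finset A, (∀ t, ∃ b, pat t b ∉ D) → ∑ a ∈ D, ν a ≤ κ) (hκ0 : 0 ≤ κ)
    (hν : ∀ a, 0 ≤ ν a) (hK : ∑ a, ν a ≤ κ + K) (hK0 : 0 ≤ K) :
    ∀ {n : ℕ} (F : Finset (Fin n → A)),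
      ∑ x ∈ F, ∏ i, ν (x i) ≤
        ∑ ρ with IsShattered pat F ρ, ∏ i, (ρ i).elim κ fun _ => K
  | 0, F => by
    rcases F.eq_empty_or_nonempty with rfl | ⟨x, hx⟩
    · simp [IsShattered]
    · have hsh (ρ : Fin 0 → Option T) : IsShattered pat F ρ := fun _ => ⟨x, hx, fun i => i.elim0⟩
      simpa [hsh] using Finset.card_le_one_of_subsingleton F
  | n + 1, F => by
    set c : Option T → ℝ := fun o => o.elim κ fun _ => K
    have hc0 (o : Option T) : 0 ≤ c o := by
      cases o with
      | none => exact hκ0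
      | some t => exact hK0
    calc ∑ x ∈ F, ∏ i, ν (x i)
        ≤ ∑ x : Fin n → A, (∑ o, if x ∈ patternLink pat F o then c o else 0) * ∏ i, ν (x i) := by
          rw [sum_prod_eq_sum_sum_cons_mem]
          gcongr with x
          · exact Finset.prod_nonneg fun i _ => hν _
          · exact sum_cons_mem_le_sum_patternLink hκ hκ0 hν hK hK0 F x
      _ = ∑ o, c o * ∑ x ∈ patternLink pat F o, ∏ i, ν (x i) := by
          simp only [Finset.sum_mul, ite_mul, zero_mul, Finset.mul_sum]
          rw [Finset.sum_comm]
          exact Finset.sum_congr rfl fun o _ => by rw [← Finset.sum_filter, Finset.filter_univ_mem]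
      _ ≤ ∑ o, c o * ∑ ρ with IsShattered pat (patternLink pat F o) ρ, ∏ i, c (ρ i) := by
          gcongr with o
          · exact hc0 o
          · exact sum_prod_le_sum_shattered_fin hκ hκ0 hν hK hK0 _
      _ ≤ ∑ o, c o * ∑ ρ : Fin n → Option T with IsShattered pat F (Fin.cons o ρ),
            ∏ i, c (ρ i) := by
          gcongr with o
          · exact hc0 o
          · exact fun ρ _ _ => Finset.prod_nonneg fun i _ => hc0 _
          · exact IsShattered.cons
      _ = ∑ ρ with IsShattered pat F ρ, ∏ i, c (ρ i) := by
          rw [Finset.sum_filter, ← (Fin.consEquiv fun _ => Option T).sum_comp,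
            Fintype.sum_prod_type]
          simp [Fin.consEquiv, Fin.prod_univ_succ, Finset.mul_sum, Finset.sum_filter]

variable [Fintype ι]

open scoped Classical in
/-- A weighted form of Pajor's inequality, which is the case `A = B = Bool`, `T = Unit`,
`pat _ = id`, `ν = 1`, `κ = K = 1`: a set family has at most as many members as there are sets it
shatters. -/
theorem sum_prod_le_sum_shattered
    (hκ : ∀ D : Finset A, (∀ t, ∃ b, pat t b ∉ D) → ∑ a ∈ D, ν a ≤ κ) (hκ0 : 0 ≤ κ)
    (hν : ∀ a, 0 ≤ ν a) (hK : ∑ a, ν a ≤ κ + K) (hK0 : 0 ≤ K) (F : Finset (ι → A)) :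
    ∑ x ∈ F, ∏ i, ν (x i) ≤ ∑ ρ with IsShattered pat F ρ, ∏ i, (ρ i).elim κ fun _ => K := by
  let e := Fintype.equivFin ι
  let F' := F.map (e.arrowCongr (Equiv.refl A)).toEmbedding
  calc ∑ x ∈ F, ∏ i, ν (x i) = ∑ x ∈ F', ∏ i, ν (x i) := by
        rw [Finset.sum_map]
        exact Finset.sum_congr rfl fun x _ => (e.symm.prod_comp fun i => ν (x i)).symm
    _ ≤ ∑ ρ with IsShattered pat F' ρ, ∏ i, (ρ i).elim κ fun _ => K :=
        sum_prod_le_sum_shattered_fin hκ hκ0 hν hK hK0 F'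
    _ = _ := by
        refine (Finset.sum_equiv (e.arrowCongr (Equiv.refl (Option T))) (fun ρ => ?_)
          fun ρ _ => (e.symm.prod_comp fun i => (ρ i).elim κ fun _ => K).symm).symm
        rw [Finset.mem_filter_univ, Finset.mem_filter_univ]
        exact (isShattered_map_arrowCongr pat e F ρ).symm

theorem sum_prod_le_of_card_shattered_le
    (hκ : ∀ D : Finset A, (∀ t, ∃ b, pat t b ∉ D) → ∑ a ∈ D, ν a ≤ κ) (hκ0 : 0 ≤ κ)
    (hν : ∀ a, 0 ≤ ν a) (hK : ∑ a, ν a ≤ κ + K) (hK0 : 0 ≤ K) {F : Finset (ι → A)} {d y : ℝ}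
    (hF : ∀ ρ, IsShattered pat F ρ → ((Finset.univ.filter fun i => (ρ i).isSome).card : ℝ) ≤ d)
    (hy0 : 0 < y) (hy1 : y ≤ 1) :
    ∑ x ∈ F, ∏ i, ν (x i) ≤ (κ + Fintype.card T * K * y) ^ Fintype.card ι * y ^ (-d) := by
  classical
  have elim_nonneg {b : ℝ} (hb : 0 ≤ b) (o : Option T) : 0 ≤ o.elim κ fun _ => b := by
    cases o with
    | none => exact hκ0
    | some t => exact hb
  -- Each coordinate where `ρ` is defined is charged an additional factor `y`, repaid by `y ^ (-d)`.
  have charge (ρ : ι → Option T) (hρ : IsShattered pat F ρ) :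
      ∏ i, (ρ i).elim κ (fun _ => K) ≤ (∏ i, (ρ i).elim κ fun _ => K * y) * y ^ (-d) := by
    set s : Finset ι := Finset.univ.filter fun i => (ρ i).isSome
    have hsplit : ∏ i, (ρ i).elim κ (fun _ => K * y) =
        (∏ i, (ρ i).elim κ fun _ => K) * y ^ s.card := by
      rw [← Finset.prod_const, Finset.prod_filter, ← Finset.prod_mul_distrib]
      exact Finset.prod_congr rfl fun i _ => by cases ρ i <;> simp
    have hpow : 1 ≤ y ^ s.card * y ^ (-d) := by
      rw [← Real.rpow_natCast, ← Real.rpow_add hy0]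
      exact Real.one_le_rpow_of_pos_of_le_one_of_nonpos hy0 hy1 (by linarith [hF ρ hρ])
    rw [hsplit, mul_assoc]
    exact le_mul_of_one_le_right (Finset.prod_nonneg fun i _ => elim_nonneg hK0 _) hpow
  calc ∑ x ∈ F, ∏ i, ν (x i)
      ≤ ∑ ρ with IsShattered pat F ρ, ∏ i, (ρ i).elim κ fun _ => K :=
        sum_prod_le_sum_shattered hκ hκ0 hν hK hK0 F
    _ ≤ ∑ ρ with IsShattered pat F ρ, (∏ i, (ρ i).elim κ fun _ => K * y) * y ^ (-d) :=
        Finset.sum_le_sum fun ρ hρ => charge ρ (Finset.mem_filter.1 hρ).2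
    _ ≤ ∑ ρ : ι → Option T, (∏ i, (ρ i).elim κ fun _ => K * y) * y ^ (-d) :=
        Finset.sum_le_univ_sum_of_nonneg fun ρ =>
          mul_nonneg (Finset.prod_nonneg fun i _ => elim_nonneg (by positivity) _) (by positivity)
    _ = (∑ o : Option T, o.elim κ fun _ => K * y) ^ Fintype.card ι * y ^ (-d) := by
        rw [← Finset.sum_mul, ← Finset.card_univ, ← Finset.prod_const, Finset.prod_univ_sum,
          Fintype.piFinset_univ]
    _ = (κ + Fintype.card T * K * y) ^ Fintype.card ι * y ^ (-d) := by
        rw [Fintype.sum_option]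
        simp [mul_assoc]

end Shattering

section Counting

open scoped Nat

theorem factorial_mul_succ_pow_le (m c : ℕ) : m ! * (m + 1) ^ c ≤ c ! * (m + 1) ^ m := by
  rcases le_total m c with h | h
  · obtain ⟨d, rfl⟩ := Nat.exists_eq_add_of_le h
    calc m ! * (m + 1) ^ (m + d) = m ! * (m + 1) ^ d * (m + 1) ^ m := by ring
      _ ≤ (m + d)! * (m + 1) ^ m := by gcongr; exact Nat.factorial_mul_pow_le_factorial
  · obtain ⟨d, rfl⟩ := Nat.exists_eq_add_of_le h
    calc (c + d)! * (c + d + 1) ^ c = c ! * (c + 1).ascFactorial d * (c + d + 1) ^ c := by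
          rw [Nat.factorial_mul_ascFactorial]
      _ ≤ c ! * (c + d + 1) ^ d * (c + d + 1) ^ c := by
          gcongr
          exact (Nat.ascFactorial_le_pow_add c d).trans (Nat.pow_le_pow_left (Nat.le_succ _) d)
      _ = c ! * (c + d + 1) ^ (c + d) := by ring

theorem prod_factorial_le_of_balanced {ι : Type*} {s : Finset ι} {b c : ι → ℕ} {m : ℕ}
    (hb : ∀ j ∈ s, b j = m ∨ b j = m + 1) (hbc : ∑ j ∈ s, b j = ∑ j ∈ s, c j) :
    ∏ j ∈ s, (b j)! ≤ ∏ j ∈ s, (c j)! := by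
  have hbal (j : ι) (hj : j ∈ s) : (b j)! * (m + 1) ^ m = m ! * (m + 1) ^ b j := by
    rcases hb j hj with h | h <;> rw [h]
    rw [Nat.factorial_succ, pow_succ]
    ring
  refine Nat.le_of_mul_le_mul_right (c := ∏ j ∈ s, (m + 1) ^ m) ?_ (by positivity)
  calc (∏ j ∈ s, (b j)!) * ∏ j ∈ s, (m + 1) ^ m = ∏ j ∈ s, m ! * (m + 1) ^ b j := by
        rw [← Finset.prod_mul_distrib, Finset.prod_congr rfl hbal]
    _ = ∏ j ∈ s, m ! * (m + 1) ^ c j := by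
        simp only [Finset.prod_mul_distrib, Finset.prod_pow_eq_pow_sum, hbc]
    _ ≤ ∏ j ∈ s, (c j)! * (m + 1) ^ m :=
        Finset.prod_le_prod' fun j _ => factorial_mul_succ_pow_le m (c j)
    _ = _ := Finset.prod_mul_distrib

theorem multinomial_le_of_balanced {ι : Type*} {s : Finset ι} {b c : ι → ℕ} {m : ℕ}
    (hb : ∀ j ∈ s, b j = m ∨ b j = m + 1) (hbc : ∑ j ∈ s, b j = ∑ j ∈ s, c j) :
    Nat.multinomial s c ≤ Nat.multinomial s b := by
  rw [Nat.multinomial, Nat.multinomial, hbc]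
  exact Nat.div_le_div_left (prod_factorial_le_of_balanced hb hbc)
    (Finset.prod_pos fun j _ => Nat.factorial_pos _)

theorem pow_le_pow_mul_multinomial_of_balanced {k n m : ℕ} {b : Fin k → ℕ}
    (hb : ∀ j, b j = m ∨ b j = m + 1) (hbn : ∑ j, b j = n) :
    k ^ n ≤ (n + 1) ^ k * Nat.multinomial Finset.univ b := by
  have hcard : (Finset.univ.piAntidiag n : Finset (Fin k → ℕ)).card ≤ (n + 1) ^ k := by
    calc (Finset.univ.piAntidiag n : Finset (Fin k → ℕ)).card
        ≤ (Fintype.piFinset fun _ : Fin k => Finset.range (n + 1)).card := by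
          refine Finset.card_le_card fun c hc => Fintype.mem_piFinset.2 fun j => ?_
          rw [Finset.mem_range, Nat.lt_succ_iff, ← (Finset.mem_piAntidiag.1 hc).1]
          exact Finset.single_le_sum (fun _ _ => Nat.zero_le _) (Finset.mem_univ j)
      _ = (n + 1) ^ k := by simp
  calc k ^ n
      = ∑ c ∈ (Finset.univ.piAntidiag n : Finset (Fin k → ℕ)), Nat.multinomial Finset.univ c := by
        simpa using Finset.sum_pow_eq_sum_piAntidiag (R := ℕ) (Finset.univ : Finset (Fin k)) 1 n
    _ ≤ ∑ c ∈ (Finset.univ.piAntidiag n : Finset (Fin k → ℕ)), Nat.multinomial Finset.univ b :=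
        Finset.sum_le_sum fun c hc => multinomial_le_of_balanced (fun j _ => hb j)
          (hbn.trans (Finset.mem_piAntidiag.1 hc).1.symm)
    _ ≤ (n + 1) ^ k * Nat.multinomial Finset.univ b := by
        rw [Finset.sum_const, smul_eq_mul]
        gcongr

variable {Z : Type*} [Fintype Z] {k : ℕ}

theorem card_factorial_le_prod_factorial_card_fiber_mul {ι : Type*} [Fintype ι] [DecidableEq ι]
    {ψ : Z → ι} {S : Finset (Z → ι)} (hS : ∀ g : Equiv.Perm Z, ψ ∘ g ∈ S) :
    (Fintype.card Z)! ≤ (∏ j, (Finset.univ.filter fun z => ψ z = j).card !) * S.card := by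
  classical
  have hfiber (χ : Z → ι) :
      (Finset.univ.filter fun g : Equiv.Perm Z => ψ ∘ g = χ).card ≤
        ∏ j, (Finset.univ.filter fun z => ψ z = j).card ! := by
    rcases Finset.eq_empty_or_nonempty (Finset.univ.filter fun g : Equiv.Perm Z => ψ ∘ g = χ)
      with h | ⟨g₀, hg₀⟩
    · simp [h]
    · have hstab := DomMulAct.stabilizer_card ψ
      simp only [Fintype.card_subtype] at hstab
      rw [← hstab]
      refine Finset.card_le_card_of_injOn (· * g₀⁻¹) (fun g hg => ?_)
        (mul_left_injective _).injOn
      have hg' : ψ ∘ g = ψ ∘ g₀ :=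
        (Finset.mem_filter.1 hg).2.trans (Finset.mem_filter.1 hg₀).2.symm
      refine Finset.mem_filter.2 ⟨Finset.mem_univ _, funext fun z => ?_⟩
      simpa using congrFun hg' (g₀⁻¹ z)
  rw [← Fintype.card_perm, ← Finset.card_univ]
  exact Finset.card_le_mul_card_image_of_maps_to (fun g _ => hS g) _ fun χ _ => hfiber χ

namespace Equidistributed

theorem comp_equiv {ψ : Z → Fin k} (hψ : Equidistributed k ψ) (e : Equiv.Perm Z) :
    Equidistributed k (ψ ∘ e) := by
  intro j
  convert hψ j using 4
  exact Finset.card_equiv e (by simp)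

theorem card_fiber {ψ : Z → Fin k} (hψ : Equidistributed k ψ) (j : Fin k) :
    (Finset.univ.filter fun z => ψ z = j).card = Fintype.card Z / k ∨
      (Finset.univ.filter fun z => ψ z = j).card = Fintype.card Z / k + 1 := by
  obtain ⟨hlo, hhi⟩ := abs_lt.1 (hψ j)
  have hfloor : ((Fintype.card Z / k : ℕ) : ℝ) ≤ Fintype.card Z / k := Nat.cast_div_le
  have hlt : (Fintype.card Z : ℝ) / k < (Fintype.card Z / k : ℕ) + 1 := by
    rw [← Nat.floor_div_eq_div (K := ℝ)]
    exact Nat.lt_floor_add_one _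
  have hge : Fintype.card Z / k < (Finset.univ.filter fun z => ψ z = j).card + 1 := by
    exact_mod_cast (by linarith :
      ((Fintype.card Z / k : ℕ) : ℝ) < (Finset.univ.filter fun z => ψ z = j).card + 1)
  have hle : (Finset.univ.filter fun z => ψ z = j).card < Fintype.card Z / k + 1 + 1 := by
    exact_mod_cast (by linarith :
      ((Finset.univ.filter fun z => ψ z = j).card : ℝ) < (Fintype.card Z / k : ℕ) + 1 + 1)
  lia

end Equidistributed

theorem card_filter_fin_val_eq_count {n : ℕ} (P : ℕ → Prop) [DecidablePred P] :
    (Finset.univ.filter fun i : Fin n => P i).card = Nat.count P n := by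
  rw [Nat.count_eq_card_filter_range, ← Nat.Iio_eq_range, ← Fin.map_valEmbedding_univ,
    Finset.filter_map, Finset.card_map]
  rfl

theorem exists_equidistributed (Z : Type*) [Fintype Z] {k : ℕ} (hk : 1 ≤ k) :
    ∃ ψ : Z → Fin k, Equidistributed k ψ := by
  let e := Fintype.equivFin Z
  refine ⟨fun z => ⟨e z % k, Nat.mod_lt _ hk⟩, fun j => ?_⟩
  have hcard : (Finset.univ.filter fun z => (⟨e z % k, Nat.mod_lt _ hk⟩ : Fin k) = j).card =
      Nat.count (· ≡ j [MOD k]) (Fintype.card Z) := by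
    rw [← card_filter_fin_val_eq_count]
    exact Finset.card_equiv e fun z => by simp [Fin.ext_iff, Nat.ModEq, Nat.mod_eq_of_lt j.2]
  have hk' : (0 : ℝ) < k := Nat.cast_pos.2 hk
  have hdiv : (Fintype.card Z : ℝ) / k =
      (Fintype.card Z / k : ℕ) + ((Fintype.card Z % k : ℕ) : ℝ) / k := by
    rw [div_eq_iff hk'.ne', add_mul, div_mul_cancel₀ _ hk'.ne', mul_comm]
    exact_mod_cast (Nat.div_add_mod _ k).symm
  have hlt : ((Fintype.card Z % k : ℕ) : ℝ) / k < 1 :=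
    (div_lt_one hk').2 (Nat.cast_lt.2 (Nat.mod_lt _ hk))
  rw [hcard, Nat.count_modEq_card _ hk, hdiv, abs_lt]
  split_ifs with hj
  · have hpos : 0 < ((Fintype.card Z % k : ℕ) : ℝ) / k :=
      div_pos (Nat.cast_pos.2 (Nat.zero_lt_of_lt hj)) hk'
    push_cast
    constructor <;> linarith
  · have hnonneg : 0 ≤ ((Fintype.card Z % k : ℕ) : ℝ) / k := by positivity
    push_cast
    constructor <;> linarith

open scoped Classical in
theorem pow_card_le_mul_card_equidistributed (Z : Type*) [Fintype Z] {k : ℕ} (hk : 1 ≤ k) :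
    k ^ Fintype.card Z ≤ (Fintype.card Z + 1) ^ k *
      (Finset.univ.filter fun ψ : Z → Fin k => Equidistributed k ψ).card := by
  obtain ⟨ψ, hψ⟩ := exists_equidistributed Z hk
  set b : Fin k → ℕ := fun j => (Finset.univ.filter fun z => ψ z = j).card
  have hb : ∑ j, b j = Fintype.card Z :=
    (Finset.card_eq_sum_card_fiberwise (by simp)).symm
  have horbit : Nat.multinomial Finset.univ b ≤
      (Finset.univ.filter fun ψ : Z → Fin k => Equidistributed k ψ).card := by
    refine Nat.le_of_mul_le_mul_left ?_
      (Finset.prod_pos fun j (_ : j ∈ Finset.univ) => Nat.factorial_pos (b j))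
    rw [Nat.multinomial_spec, hb]
    exact card_factorial_le_prod_factorial_card_fiber_mul fun g =>
      Finset.mem_filter.2 ⟨Finset.mem_univ _, hψ.comp_equiv g⟩
  exact (pow_le_pow_mul_multinomial_of_balanced hψ.card_fiber hb).trans
    (Nat.mul_le_mul_left _ horbit)

end Counting

section Tilt

open Filter Topology

/-- The derivative of `l ↦ k e^{l ρ} - ∑ⱼ e^{l tⱼ}` at `0` is `k ρ - ∑ⱼ tⱼ`. -/
theorem eventually_sum_exp_lt {k : ℕ} {ρ : ℝ} {t : Fin k → ℝ} (ht : ∑ j, t j < k * ρ) :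
    ∀ᶠ l in 𝓝[>] (0 : ℝ), ∑ j, Real.exp (l * t j) < k * Real.exp (l * ρ) := by
  have hexp (a : ℝ) : HasDerivAt (fun l => Real.exp (l * a)) a 0 := by
    simpa using ((hasDerivAt_id (0 : ℝ)).mul_const a).exp
  have hderiv : HasDerivAt (fun l => k * Real.exp (l * ρ) - ∑ j, Real.exp (l * t j))
      (k * ρ - ∑ j, t j) 0 :=
    ((hexp ρ).const_mul _).sub (HasDerivAt.fun_sum fun j _ => hexp (t j))
  have hsign := eventually_nhdsWithin_sign_eq_of_deriv_pos
    (hderiv.deriv.symm ▸ sub_pos.2 ht) (by simp)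
  filter_upwards [hsign.filter_mono nhdsWithin_le_nhds, self_mem_nhdsWithin] with l hl hl0
  rw [sub_zero, sign_pos (Set.mem_Ioi.1 hl0), sign_eq_one_iff] at hl
  exact sub_pos.1 hl

theorem exists_sum_exp_le_lt {k m : ℕ} (hk : 1 ≤ k) (ρ : ℝ) :
    ∃ l κ : ℝ, 0 < l ∧ 0 ≤ κ ∧ κ < k * Real.exp (l * ρ) ∧
      ∀ t : Fin k → Fin (m + 1), ∑ j, ((t j : ℕ) : ℝ) < k * ρ →
        ∑ j, Real.exp (l * (t j : ℕ)) ≤ κ := by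
  have hl : ∀ᶠ l in 𝓝[>] (0 : ℝ), ∀ t : Fin k → Fin (m + 1), ∑ j, ((t j : ℕ) : ℝ) < k * ρ →
      ∑ j, Real.exp (l * (t j : ℕ)) < k * Real.exp (l * ρ) :=
    eventually_all.2 fun t => eventually_imp_distrib_left.2 eventually_sum_exp_lt
  obtain ⟨l, hlt, hl0⟩ := (hl.and self_mem_nhdsWithin).exists
  have hX : 0 < k * Real.exp (l * ρ) := mul_pos (Nat.cast_pos.2 hk) (Real.exp_pos _)
  have hκ : ∀ᶠ κ in 𝓝[<] (k * Real.exp (l * ρ)),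
      ∀ t : Fin k → Fin (m + 1), ∑ j, ((t j : ℕ) : ℝ) < k * ρ →
        ∑ j, Real.exp (l * (t j : ℕ)) ≤ κ :=
    (eventually_all.2 fun t => eventually_imp_distrib_left.2 fun ht =>
      eventually_ge_nhds (hlt t ht)).filter_mono nhdsWithin_le_nhds
  obtain ⟨κ, hκt, hκ0, hκX⟩ := (hκ.and
    (((eventually_ge_nhds hX).filter_mono nhdsWithin_le_nhds).and self_mem_nhdsWithin)).exists
  exact ⟨l, κ, hl0, hκ0, hκX, hκt⟩

theorem exists_add_mul_mul_rpow_lt {κ X : ℝ} (hκX : κ < X) (A : ℝ) :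
    ∃ y c : ℝ, 0 < y ∧ y ≤ 1 ∧ 0 < c ∧ (κ + A * y) * y ^ (-c) < X := by
  have hy : ∀ᶠ y in 𝓝[>] (0 : ℝ), κ + A * y < X :=
    (ContinuousAt.eventually_lt (by fun_prop) continuousAt_const
      (by simpa using hκX)).filter_mono nhdsWithin_le_nhds
  obtain ⟨y, hyX, hy0, hy1⟩ := (hy.and (Ioc_mem_nhdsGT zero_lt_one)).exists
  have hc : ∀ᶠ c in 𝓝[>] (0 : ℝ), (κ + A * y) * y ^ (-c) < X :=
    (ContinuousAt.eventually_lt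
      (continuousAt_const.mul ((Real.continuousAt_const_rpow hy0.ne').comp continuousAt_neg))
      continuousAt_const (by simpa using hyX)).filter_mono nhdsWithin_le_nhds
  obtain ⟨c, hcX, hc0⟩ := (hc.and self_mem_nhdsWithin).exists
  exact ⟨y, c, hy0, hy1, hc0, hcX⟩

theorem eventually_succ_pow_mul_pow_lt (k : ℕ) {a b : ℝ} (ha : 0 ≤ a) (hab : a < b) :
    ∀ᶠ n : ℕ in atTop, ((n : ℝ) + 1) ^ k * a ^ n < b ^ n := by
  have hb : 0 < b := ha.trans_lt hab
  have hlittle := isLittleO_pow_const_mul_const_pow_const_pow_of_norm_lt k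
    (show ‖a‖ < b by rwa [Real.norm_of_nonneg ha])
  filter_upwards [hlittle.def (c := (2 ^ (k + 1))⁻¹) (by positivity), eventually_ge_atTop 1]
    with n hn hn1
  have hn1' : (1 : ℝ) ≤ n := Nat.one_le_cast.2 hn1
  rw [Real.norm_of_nonneg (by positivity), Real.norm_of_nonneg (by positivity)] at hn
  calc ((n : ℝ) + 1) ^ k * a ^ n ≤ (2 * n) ^ k * a ^ n := by
        gcongr
        linarith
    _ = 2 ^ k * (n ^ k * a ^ n) := by ring
    _ ≤ 2 ^ k * ((2 ^ (k + 1))⁻¹ * b ^ n) := by gcongr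
    _ = b ^ n / 2 := by
        rw [pow_succ]
        field_simp
    _ < b ^ n := half_lt_self (by positivity)

end Tilt

section Levels

theorem sum_filter_prod_snd_eq_sum_prod_sum {Z A B : Type*} [Fintype Z] [Fintype A] [Fintype B]
    [DecidableEq Z] [DecidableEq A] [DecidableEq B] (S : Finset (Z → A))
    (E : (Z → A) → Z → Finset B) (ν : B → ℝ) :
    ∑ x : Z → A × B with Prod.fst ∘ x ∈ S ∧ ∀ z, (x z).2 ∈ E (Prod.fst ∘ x) z, ∏ z, ν (x z).2 =
      ∑ ψ ∈ S, ∏ z, ∑ b ∈ E ψ z, ν b := by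
  calc _ = ∑ y : (Z → A) × (Z → B) with y.1 ∈ S ∧ ∀ z, y.2 z ∈ E y.1 z, ∏ z, ν (y.2 z) :=
        Finset.sum_equiv (Equiv.arrowProdEquivProdArrow Z (fun _ => A) fun _ => B)
          (fun x => by simp [Equiv.arrowProdEquivProdArrow, Function.comp_def]) fun _ _ => rfl
    _ = ∑ ψ ∈ S, ∑ y ∈ Fintype.piFinset (E ψ), ∏ z, ν (y z) :=
        Finset.sum_finset_product _ _ _ fun y => by simp
    _ = _ := by simp only [Finset.prod_univ_sum]

/-- The mass of level `i` when, for each `i`, the levels `≤ i` have total mass `e^{l i}`. -/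
noncomputable def expIncrement (l : ℝ) : ℕ → ℝ
  | 0 => 1
  | i + 1 => Real.exp (l * (i + 1 : ℕ)) - Real.exp (l * i)

theorem expIncrement_nonneg {l : ℝ} (hl : 0 ≤ l) : ∀ i, 0 ≤ expIncrement l i
  | 0 => zero_le_one
  | i + 1 => sub_nonneg.2 (Real.exp_le_exp.2 (by gcongr; exact Nat.le_succ i))

theorem sum_range_succ_expIncrement (l : ℝ) (i : ℕ) :
    ∑ i' ∈ Finset.range (i + 1), expIncrement l i' = Real.exp (l * i) := by
  induction i with
  | zero => simp [expIncrement]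
  | succ i ih => rw [Finset.sum_range_succ, ih, expIncrement, add_sub_cancel]

theorem sum_Iic_expIncrement (l : ℝ) {m : ℕ} (i : Fin (m + 1)) :
    ∑ i' ∈ Finset.Iic i, expIncrement l i' = Real.exp (l * (i : ℕ)) := by
  rw [← sum_range_succ_expIncrement, Nat.range_succ_eq_Iic, ← Fin.map_valEmbedding_Iic,
    Finset.sum_map]
  rfl

variable {k m : ℕ} {l ρ κ : ℝ}

theorem ne_zero_of_le_sum (hρ : (k - 1 : ℝ) * m < k * ρ) {t : Fin k → Fin (m + 1)}
    (ht : k * ρ ≤ ∑ j, ((t j : ℕ) : ℝ)) (j : Fin k) : t j ≠ 0 := by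
  intro hj
  have hk : 1 ≤ k := Fin.pos j
  have hsum : ∑ j, ((t j : ℕ) : ℝ) ≤ (k - 1 : ℝ) * m := by
    rw [← Finset.add_sum_erase _ _ (Finset.mem_univ j), hj]
    calc (((0 : Fin (m + 1)) : ℕ) : ℝ) + ∑ i ∈ Finset.univ.erase j, ((t i : ℕ) : ℝ)
        ≤ 0 + ∑ _i ∈ Finset.univ.erase j, (m : ℝ) := by
          gcongr
          · simp
          · exact Fin.is_le _
      _ = (k - 1 : ℝ) * m := by simp [Finset.card_erase_of_mem, Nat.cast_sub hk]
  linarith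

theorem sum_expIncrement_le (hl : 0 ≤ l) (hρ : (k - 1 : ℝ) * m < k * ρ)
    (hκ : ∀ t : Fin k → Fin (m + 1), ∑ j, ((t j : ℕ) : ℝ) < k * ρ →
      ∑ j, Real.exp (l * (t j : ℕ)) ≤ κ)
    {D : Finset (Fin k × Fin (m + 1))}
    (hD : ∀ t : Fin k → Fin (m + 1), k * ρ ≤ ∑ j, ((t j : ℕ) : ℝ) → ∃ j, (j, t j) ∉ D) :
    ∑ a ∈ D, expIncrement l a.2 ≤ κ := by
  let top (j : Fin k) : Fin (m + 1) := (D.filter fun a => a.1 = j).sup Prod.snd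
  have htop : ∑ j, ((top j : ℕ) : ℝ) < k * ρ := by
    by_contra! hsum
    obtain ⟨j, hj⟩ := hD top hsum
    rcases (D.filter fun a => a.1 = j).eq_empty_or_nonempty with h | h
    · exact ne_zero_of_le_sum hρ hsum j (by simp only [top, h, Finset.sup_empty, bot_eq_zero])
    · obtain ⟨a, ha, hsup⟩ := Finset.exists_mem_eq_sup _ h Prod.snd
      obtain ⟨haD, rfl⟩ := Finset.mem_filter.1 ha
      exact hj (by simpa only [top, hsup] using haD)
  calc ∑ a ∈ D, expIncrement l a.2
      ≤ ∑ a : Fin k × Fin (m + 1) with a.2 ≤ top a.1, expIncrement l a.2 :=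
        Finset.sum_le_sum_of_subset_of_nonneg
          (fun a ha => Finset.mem_filter.2 ⟨Finset.mem_univ _,
            Finset.le_sup (f := Prod.snd) (Finset.mem_filter.2 ⟨ha, rfl⟩)⟩)
          fun a _ _ => expIncrement_nonneg hl _
    _ = ∑ j, ∑ i ∈ Finset.Iic (top j), expIncrement l i := by
        simp only [← Finset.filter_ge_eq_Iic, Finset.sum_filter, Fintype.sum_prod_type]
    _ ≤ κ := by simpa only [sum_Iic_expIncrement] using hκ top htop

end Levels

section Discrete

variable {Z : Type*} [Fintype Z] {k m : ℕ}

open scoped Classical in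
/-- The pairs (equidistributed `ψ`, level function `≤ ℓ ψ`), encoded as maps into
`Fin k × Fin (m + 1)`. -/
noncomputable def levelSubgraphs (ℓ : (Z → Fin k) → Z → Fin (m + 1)) :
    Finset (Z → Fin k × Fin (m + 1)) :=
  {x | Equidistributed k (Prod.fst ∘ x) ∧ ∀ z, (x z).2 ≤ ℓ (Prod.fst ∘ x) z}

theorem mem_levelSubgraphs {ℓ : (Z → Fin k) → Z → Fin (m + 1)} {x : Z → Fin k × Fin (m + 1)} :
    x ∈ levelSubgraphs ℓ ↔
      Equidistributed k (Prod.fst ∘ x) ∧ ∀ z, (x z).2 ≤ ℓ (Prod.fst ∘ x) z := by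
  classical exact Finset.mem_filter_univ x

theorem pow_le_mul_sum_levelSubgraphs (hk : 1 ≤ k) {l ρ : ℝ} (hl : 0 ≤ l)
    {ℓ : (Z → Fin k) → Z → Fin (m + 1)}
    (hℓ : ∀ ψ, Equidistributed k ψ → ρ * Fintype.card Z ≤ ∑ z, ((ℓ ψ z : ℕ) : ℝ)) :
    (k * Real.exp (l * ρ)) ^ Fintype.card Z ≤
      ((Fintype.card Z : ℝ) + 1) ^ k * ∑ x ∈ levelSubgraphs ℓ, ∏ z, expIncrement l (x z).2 := by
  classical
  set S : Finset (Z → Fin k) := Finset.univ.filter (Equidistributed k)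
  have hS : (k : ℝ) ^ Fintype.card Z ≤ ((Fintype.card Z : ℝ) + 1) ^ k * S.card := by
    exact_mod_cast pow_card_le_mul_card_equidistributed Z hk
  have hsum : ∑ x ∈ levelSubgraphs ℓ, ∏ z, expIncrement l (x z).2 =
      ∑ ψ ∈ S, Real.exp (l * ∑ z, ((ℓ ψ z : ℕ) : ℝ)) := by
    simp only [Finset.mul_sum, Real.exp_sum, ← sum_Iic_expIncrement]
    rw [← sum_filter_prod_snd_eq_sum_prod_sum S (fun ψ z => Finset.Iic (ℓ ψ z))
      (expIncrement l ·)]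
    exact Finset.sum_congr (by ext; simp [mem_levelSubgraphs, S]) fun _ _ => rfl
  calc (k * Real.exp (l * ρ)) ^ Fintype.card Z
      = (k : ℝ) ^ Fintype.card Z * Real.exp (l * (ρ * Fintype.card Z)) := by
        rw [mul_pow, ← Real.exp_nat_mul]
        ring_nf
    _ ≤ ((Fintype.card Z : ℝ) + 1) ^ k * S.card * Real.exp (l * (ρ * Fintype.card Z)) := by gcongr
    _ = ((Fintype.card Z : ℝ) + 1) ^ k * ∑ _ψ ∈ S, Real.exp (l * (ρ * Fintype.card Z)) := by
        rw [Finset.sum_const, nsmul_eq_mul, mul_assoc]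
    _ ≤ _ := by
        rw [hsum]
        gcongr with _ hψ
        exact hℓ _ (Finset.mem_filter.1 hψ).2

/-- The level patterns `t` with `∑ⱼ tⱼ ≥ k ρ`. -/
abbrev HeavyPattern (k m : ℕ) (ρ : ℝ) : Type :=
  {t : Fin k → Fin (m + 1) // k * ρ ≤ ∑ j, ((t j : ℕ) : ℝ)}

/-- Entry `j` of a heavy pattern in the alphabet `Fin k × Fin (m + 1)`. -/
def HeavyPattern.entry {ρ : ℝ} (t : HeavyPattern k m ρ) (j : Fin k) : Fin k × Fin (m + 1) :=
  (j, t.1 j)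

theorem exists_isShattered_levelSubgraphs (hk : 1 ≤ k) {ρ : ℝ} (hρ : (k - 1 : ℝ) * m < k * ρ) :
    ∃ c : ℝ, 0 < c ∧ ∃ N : ℕ, ∀ (Z : Type*) [Fintype Z], N ≤ Fintype.card Z →
      ∀ ℓ : (Z → Fin k) → Z → Fin (m + 1),
        (∀ ψ, Equidistributed k ψ → ρ * Fintype.card Z ≤ ∑ z, ((ℓ ψ z : ℕ) : ℝ)) →
        ∃ τ : Z → Option (HeavyPattern k m ρ),
          IsShattered HeavyPattern.entry (levelSubgraphs ℓ) τ ∧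
          c * Fintype.card Z < (Finset.univ.filter fun z => (τ z).isSome).card := by
  classical
  obtain ⟨l, κ, hl, hκ0, hκX, hκ⟩ := exists_sum_exp_le_lt (m := m) hk ρ
  set K : ℝ := ∑ a : Fin k × Fin (m + 1), expIncrement l a.2
  have hK0 : 0 ≤ K := Finset.sum_nonneg fun a _ => expIncrement_nonneg hl.le _
  set A : ℝ := Fintype.card (HeavyPattern k m ρ) * K
  have hA0 : 0 ≤ A := by positivity
  obtain ⟨y, c, hy0, hy1, hc, hX⟩ := exists_add_mul_mul_rpow_lt hκX A
  have hbase : 0 ≤ (κ + A * y) * y ^ (-c) :=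
    mul_nonneg (add_nonneg hκ0 (mul_nonneg hA0 hy0.le)) (Real.rpow_nonneg hy0.le _)
  obtain ⟨N, hN⟩ := Filter.eventually_atTop.1 (eventually_succ_pow_mul_pow_lt k hbase hX)
  refine ⟨c, hc, N, fun Z _ hZ ℓ hℓ => ?_⟩
  by_contra! hsmall
  have hupper : ∑ x ∈ levelSubgraphs ℓ, ∏ z, expIncrement l (x z).2 ≤
      ((κ + A * y) * y ^ (-c)) ^ Fintype.card Z := by
    rw [mul_pow, ← Real.rpow_mul_natCast hy0.le, neg_mul]
    exact sum_prod_le_of_card_shattered_le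
      (fun D hD => sum_expIncrement_le hl.le hρ hκ fun t ht => hD ⟨t, ht⟩) hκ0
      (fun a => expIncrement_nonneg hl.le _) (le_add_of_nonneg_left hκ0) hK0 hsmall hy0 hy1
  refine (hN _ hZ).not_ge ((pow_le_mul_sum_levelSubgraphs hk hl.le hℓ).trans ?_)
  gcongr

theorem exists_le_card_fiber_some {Z T : Type*} [Fintype Z] [Fintype T] [DecidableEq T]
    {τ : Z → Option T} {d : ℝ} (hd : 0 ≤ d)
    (hτ : d < (Finset.univ.filter fun z => (τ z).isSome).card) :
    ∃ t, d / (Fintype.card T + 1) ≤ (Finset.univ.filter fun z => τ z = some t).card := by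
  classical
  by_contra! hfew
  refine hτ.not_ge ?_
  have hcover : (Finset.univ.filter fun z => (τ z).isSome) =
      Finset.univ.biUnion fun t => Finset.univ.filter fun z => τ z = some t := by
    ext z
    simp [Option.isSome_iff_exists]
  calc ((Finset.univ.filter fun z => (τ z).isSome).card : ℝ)
      ≤ ∑ t, ((Finset.univ.filter fun z => τ z = some t).card : ℝ) := by
        rw [hcover]
        exact_mod_cast Finset.card_biUnion_le
    _ ≤ ∑ t : T, d / (Fintype.card T + 1) := Finset.sum_le_sum fun t _ => (hfew t).le
    _ = Fintype.card T / (Fintype.card T + 1) * d := by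
        rw [Finset.sum_const, nsmul_eq_mul, Finset.card_univ]
        ring
    _ ≤ d := mul_le_of_le_one_left hd (div_le_one_of_le₀ (by simp) (by positivity))

theorem exists_indep_of_level (hk : 1 ≤ k) {ρ : ℝ} (hρ : (k - 1 : ℝ) * m < k * ρ) :
    ∃ c : ℝ, 0 < c ∧ ∃ N : ℕ, ∀ (Z : Type*) [Fintype Z], N ≤ Fintype.card Z →
      ∀ ℓ : (Z → Fin k) → Z → Fin (m + 1),
        (∀ ψ, Equidistributed k ψ → ρ * Fintype.card Z ≤ ∑ z, ((ℓ ψ z : ℕ) : ℝ)) →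
        ∃ t : HeavyPattern k m ρ, ∃ J : Finset Z, c * Fintype.card Z ≤ J.card ∧
          ∀ σ : Z → Fin k, ∃ ψ, Equidistributed k ψ ∧
            ∀ z ∈ J, ψ z = σ z ∧ t.1 (σ z) ≤ ℓ ψ z := by
  classical
  obtain ⟨c, hc, N, hN⟩ := exists_isShattered_levelSubgraphs hk hρ
  refine ⟨c / (Fintype.card (HeavyPattern k m ρ) + 1), by positivity, N, fun Z _ hZ ℓ hℓ => ?_⟩
  obtain ⟨τ, hτ, hcard⟩ := hN Z hZ ℓ hℓ
  obtain ⟨t, ht⟩ := exists_le_card_fiber_some (by positivity) hcard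
  rw [mul_div_right_comm] at ht
  refine ⟨t, _, ht, fun σ => ?_⟩
  obtain ⟨x, hx, hxσ⟩ := hτ σ
  obtain ⟨hequi, hle⟩ := mem_levelSubgraphs.1 hx
  refine ⟨Prod.fst ∘ x, hequi, fun z hz => ?_⟩
  have hxz : x z = (σ z, t.1 (σ z)) := hxσ z t (Finset.mem_filter.1 hz).2
  exact ⟨congrArg Prod.fst hxz, by simpa [hxz] using hle z⟩

end Discrete

section Bounded

variable {k : ℕ}

theorem exists_indep_of_le_of_lt (hk : 1 ≤ k) {M ρ : ℝ} (hM : 0 ≤ M) (hρ : (k - 1) * M < k * ρ) :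
    ∃ c : ℝ, 0 < c ∧ ∃ N : ℕ, ∀ (Z : Type*) [Fintype Z], N ≤ Fintype.card Z →
      ∀ g : (Z → Fin k) → Z → ℝ, (∀ ψ z, g ψ z ≤ M) →
        (∀ ψ, Equidistributed k ψ → (ρ + 1) * Fintype.card Z ≤ ∑ z, g ψ z) →
        ∃ t : HeavyPattern k ⌊M⌋₊ ρ, ∃ J : Finset Z, c * Fintype.card Z ≤ J.card ∧
          ∀ σ : Z → Fin k, ∃ ψ, Equidistributed k ψ ∧
            ∀ z ∈ J, ψ z = σ z ∧ ((t.1 (σ z) : ℕ) : ℝ) ≤ g ψ z := by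
  have hk1 : (0 : ℝ) ≤ k - 1 := sub_nonneg.2 (Nat.one_le_cast.2 hk)
  have hρ' : (k - 1 : ℝ) * ⌊M⌋₊ < k * ρ :=
    (mul_le_mul_of_nonneg_left (Nat.floor_le hM) hk1).trans_lt hρ
  obtain ⟨c, hc, N, hN⟩ := exists_indep_of_level hk hρ'
  refine ⟨c, hc, N, fun Z _ hZ g hgM hgρ => ?_⟩
  let ℓ (ψ : Z → Fin k) (z : Z) : Fin (⌊M⌋₊ + 1) :=
    ⟨⌊g ψ z⌋₊, Nat.lt_succ_of_le (Nat.floor_mono (hgM ψ z))⟩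
  have hℓ (ψ : Z → Fin k) (hψ : Equidistributed k ψ) :
      ρ * Fintype.card Z ≤ ∑ z, ((ℓ ψ z : ℕ) : ℝ) := by
    calc ρ * Fintype.card Z = (ρ + 1) * Fintype.card Z - Fintype.card Z := by ring
      _ ≤ ∑ z, g ψ z - Fintype.card Z := sub_le_sub_right (hgρ ψ hψ) _
      _ = ∑ z, (g ψ z - 1) := by simp
      _ ≤ _ := Finset.sum_le_sum fun z _ => (Nat.sub_one_lt_floor _).le
  obtain ⟨t, J, hJ, hind⟩ := hN Z hZ ℓ hℓ
  refine ⟨t, J, hJ, fun σ => ?_⟩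
  obtain ⟨ψ, hψ, hψJ⟩ := hind σ
  refine ⟨ψ, hψ, fun z hz => ⟨(hψJ z hz).1, ?_⟩⟩
  have hne : (t.1 (σ z) : ℕ) ≠ 0 := Fin.val_ne_zero_iff.2 (ne_zero_of_le_sum hρ' t.2 (σ z))
  exact (Nat.le_floor_iff' hne).1 (hψJ z hz).2

theorem exists_indep_of_le (hk : 1 ≤ k) {r R : ℝ} (hrR : r < R) (M : ℝ) :
    ∃ c : ℝ, 0 < c ∧ ∃ N : ℕ, ∃ T : Finset (Fin k → ℝ), (∀ t ∈ T, k * r ≤ ∑ j, t j) ∧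
      ∀ (Z : Type*) [Fintype Z], N ≤ Fintype.card Z → ∀ g : (Z → Fin k) → Z → ℝ,
        (∀ ψ z, g ψ z ≤ M) →
        (∀ ψ, Equidistributed k ψ → R * Fintype.card Z ≤ ∑ z, g ψ z) →
        ∃ t ∈ T, ∃ J : Finset Z, c * Fintype.card Z ≤ J.card ∧
          ∀ σ : Z → Fin k, ∃ ψ, Equidistributed k ψ ∧
            ∀ z ∈ J, ψ z = σ z ∧ t (σ z) ≤ g ψ z := by
  classical
  set δ : ℝ := R - r with hδ_def
  have hδ : 0 < δ := sub_pos.2 hrR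
  obtain ⟨B, hMB, hB⟩ : ∃ B : ℝ, 0 ≤ M + B ∧ (k - 1) * (M + B) < k * (r + B) :=
    ⟨max (-M) ((k - 1) * M - k * r + 1), by linarith [le_max_left (-M) ((k - 1) * M - k * r + 1)],
      by linarith [le_max_right (-M) ((k - 1) * M - k * r + 1)]⟩
  have hρ : (k - 1 : ℝ) * ((M + B) / δ) < k * ((r + B) / δ) := by
    simpa only [mul_div_assoc] using div_lt_div_of_pos_right hB hδ
  obtain ⟨c, hc, N, hN⟩ := exists_indep_of_le_of_lt hk (div_nonneg hMB hδ.le) hρ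
  refine ⟨c, hc, N, Finset.univ.image fun (t : HeavyPattern k ⌊(M + B) / δ⌋₊ ((r + B) / δ)) j =>
    δ * (t.1 j : ℕ) - B, fun s hs => ?_, fun Z _ hZ g hgM hgR => ?_⟩
  · obtain ⟨t, -, rfl⟩ := Finset.mem_image.1 hs
    have hsum : k * (r + B) ≤ δ * ∑ j, ((t.1 j : ℕ) : ℝ) := by
      rw [← div_le_iff₀' hδ, mul_div_assoc]
      exact t.2
    simp only [Finset.sum_sub_distrib, ← Finset.mul_sum, Finset.sum_const, Finset.card_univ,
      Fintype.card_fin, nsmul_eq_mul]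
    linarith
  have hgR' (ψ : Z → Fin k) (hψ : Equidistributed k ψ) :
      ((r + B) / δ + 1) * Fintype.card Z ≤ ∑ z, (g ψ z + B) / δ := by
    rw [← Finset.sum_div, le_div_iff₀ hδ, Finset.sum_add_distrib, Finset.sum_const,
      Finset.card_univ, nsmul_eq_mul]
    calc ((r + B) / δ + 1) * Fintype.card Z * δ = R * Fintype.card Z + Fintype.card Z * B := by
          rw [div_add_one hδ.ne', hδ_def]
          field_simp [sub_pos.2 hrR |>.ne']
          ring
      _ ≤ _ := by gcongr; exact hgR ψ hψ
  obtain ⟨t, J, hJ, hind⟩ := hN Z hZ (fun ψ z => (g ψ z + B) / δ)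
    (fun ψ z => by gcongr; exact hgM ψ z) hgR'
  refine ⟨_, Finset.mem_image_of_mem _ (Finset.mem_univ t), J, hJ, fun σ => ?_⟩
  obtain ⟨ψ, hψ, hψJ⟩ := hind σ
  refine ⟨ψ, hψ, fun z hz => ⟨(hψJ z hz).1, ?_⟩⟩
  have hle := (hψJ z hz).2
  rw [le_div_iff₀' hδ] at hle
  linarith

end Bounded

section Truncation

theorem exists_le_min_add_mul_rpow {P ε : ℝ} (hP : 1 < P) (hε : 0 < ε) :
    ∃ M : ℝ, ∀ x, x ≤ min x M + ε * |x| ^ P := by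
  obtain ⟨M, hM⟩ := Filter.eventually_atTop.1
    (((tendsto_rpow_atTop (sub_pos.2 hP)).eventually_ge_atTop ε⁻¹).and
      (Filter.eventually_gt_atTop 0))
  refine ⟨M, fun x => ?_⟩
  rcases le_total x M with hx | hx
  · rw [min_eq_left hx]
    exact le_add_of_nonneg_right (by positivity)
  · obtain ⟨hxε, hx0⟩ := hM x hx
    have hM0 : 0 < M := (hM M le_rfl).2
    calc x = ε * (ε⁻¹ * x) := (mul_inv_cancel_left₀ hε.ne' x).symm
      _ ≤ ε * (x ^ (P - 1) * x) := by gcongr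
      _ = ε * |x| ^ P := by
          rw [abs_of_pos hx0, Real.rpow_sub_one hx0.ne', div_mul_cancel₀ _ hx0.ne']
      _ ≤ min x M + ε * |x| ^ P := le_add_of_nonneg_left (le_min hx0.le hM0.le)

section lpNorm

variable {Z : Type*} [Fintype Z] {f : Z → ℝ} {C : ℝ}

theorem abs_le_of_lpNorm_top_le (hf : lpNorm ⊤ f ≤ C) (z : Z) : |f z| ≤ C := by
  rw [lpNorm, if_pos rfl] at hf
  exact (le_ciSup (Set.finite_range fun z => |f z|).bddAbove z).trans hf

theorem sum_abs_rpow_le_of_lpNorm_le {p : ℝ≥0∞} (hp0 : p ≠ 0) (hp : p ≠ ⊤) (hf : lpNorm p f ≤ C) :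
    ∑ z, |f z| ^ p.toReal ≤ C ^ p.toReal := by
  have hP : 0 < p.toReal := ENNReal.toReal_pos hp0 hp
  have hsum : 0 ≤ ∑ z, |f z| ^ p.toReal := Finset.sum_nonneg fun z _ => by positivity
  rw [lpNorm, if_neg hp, one_div] at hf
  calc _ = ((∑ z, |f z| ^ p.toReal) ^ p.toReal⁻¹) ^ p.toReal :=
        (Real.rpow_inv_rpow hsum hP.ne').symm
    _ ≤ C ^ p.toReal := by gcongr

end lpNorm

theorem exists_sum_le_sum_min_add {p : ℝ≥0∞} (hp : 1 < p) (C : ℝ) {ε : ℝ} (hε : 0 < ε) :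
    ∃ M : ℝ, ∀ (Z : Type*) [Fintype Z] (f : Z → ℝ), lpNorm p f ≤ C →
      ∑ z, f z * (Fintype.card Z : ℝ) ^ (1 / p).toReal ≤
        ∑ z, min (f z * (Fintype.card Z : ℝ) ^ (1 / p).toReal) M + ε * Fintype.card Z := by
  rcases eq_or_ne p ⊤ with rfl | hp_top
  · refine ⟨C, fun Z _ f hf => ?_⟩
    have hfC (z : Z) : f z ≤ C := (le_abs_self _).trans (abs_le_of_lpNorm_top_le hf z)
    simpa [hfC] using mul_nonneg hε.le (Nat.cast_nonneg _)
  have hP : 1 < p.toReal := (ENNReal.toReal_lt_toReal ENNReal.one_ne_top hp_top).2 hp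
  obtain ⟨η, hη, hηε⟩ := exists_pos_mul_lt hε (C ^ p.toReal)
  obtain ⟨M, hM⟩ := exists_le_min_add_mul_rpow hP hη
  refine ⟨M, fun Z _ f hf => ?_⟩
  have hpow : ∑ z, |f z * (Fintype.card Z : ℝ) ^ (1 / p).toReal| ^ p.toReal ≤
      C ^ p.toReal * Fintype.card Z := by
    calc _ = (∑ z, |f z| ^ p.toReal) * Fintype.card Z := by
          rw [Finset.sum_mul]
          refine Finset.sum_congr rfl fun z _ => ?_
          rw [abs_mul, Real.mul_rpow (abs_nonneg _) (abs_nonneg _), one_div, ENNReal.toReal_inv,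
            Real.abs_rpow_of_nonneg (Nat.cast_nonneg _), Nat.abs_cast,
            Real.rpow_inv_rpow (Nat.cast_nonneg _) (by positivity)]
      _ ≤ _ := by
          gcongr
          exact sum_abs_rpow_le_of_lpNorm_le (zero_lt_one.trans hp).ne' hp_top hf
  calc _ ≤ ∑ z, (min (f z * (Fintype.card Z : ℝ) ^ (1 / p).toReal) M +
            η * |f z * (Fintype.card Z : ℝ) ^ (1 / p).toReal| ^ p.toReal) :=
        Finset.sum_le_sum fun z _ => hM _
    _ ≤ ∑ z, min (f z * (Fintype.card Z : ℝ) ^ (1 / p).toReal) M +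
          η * (C ^ p.toReal * Fintype.card Z) := by
        rw [Finset.sum_add_distrib, ← Finset.mul_sum]
        gcongr
    _ ≤ _ := by
        rw [← mul_assoc, mul_comm η]
        gcongr

end Truncation

theorem toReal_add_toReal_eq_one {a b : ℝ≥0∞} (hab : a + b = 1) : a.toReal + b.toReal = 1 := by
  obtain ⟨ha, hb⟩ := ENNReal.add_ne_top.1 (hab.trans_ne ENNReal.one_ne_top)
  rw [← ENNReal.toReal_add ha hb, hab, ENNReal.toReal_one]

theorem func_to_indep_general {k : ℕ} (hk : 1 ≤ k) {r R : ℝ} (hrR : r < R) (C : ℝ) {p q : ℝ≥0∞}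
    (hp : 1 < p) (hpq : 1 / p + 1 / q = 1) :
    ∃ (c N : ℝ) (T : Finset (Fin k → ℝ)), 0 < c ∧ 0 < N ∧
      (∀ t ∈ T, r ≤ (1 / k : ℝ) * ∑ j, t j) ∧
      ∀ (Z : Type*) [Fintype Z], N ≤ (Fintype.card Z : ℝ) →
        ∀ f : (Z → Fin k) → (Z → ℝ),
          (∀ ψ, Equidistributed k ψ → lpNorm p (f ψ) ≤ C ∧
            R * (Fintype.card Z : ℝ) ^ (1 / q).toReal ≤ ∑ z, f ψ z) →
          ∃ t ∈ T, ∃ J : Finset Z, c * (Fintype.card Z : ℝ) ≤ J.card ∧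
            ∀ σ : Z → Fin k, ∃ ψ : Z → Fin k, Equidistributed k ψ ∧
              (∀ z ∈ J, ψ z = σ z) ∧
              ∀ z ∈ J, t (σ z) * (Fintype.card Z : ℝ) ^ (-(1 / p).toReal) ≤ f ψ z := by
  obtain ⟨R', hrR', hR'R⟩ := exists_between hrR
  obtain ⟨M, hM⟩ := exists_sum_le_sum_min_add hp C (sub_pos.2 hR'R)
  obtain ⟨c, hc, N, T, hT, hind⟩ := exists_indep_of_le hk hrR' M
  refine ⟨c, max N 1, T, hc, by positivity, fun t ht => ?_, fun Z _ hZ f hf => ?_⟩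
  · rw [one_div, le_inv_mul_iff₀ (by positivity)]
    exact hT t ht
  have hn : 0 < (Fintype.card Z : ℝ) := one_pos.trans_le ((le_max_right _ _).trans hZ)
  have hα : (1 / q).toReal + (1 / p).toReal = 1 := toReal_add_toReal_eq_one (by rwa [add_comm])
  obtain ⟨t, ht, J, hJ, hJind⟩ := hind Z (Nat.cast_le.1 ((le_max_left _ _).trans hZ))
    (fun ψ z => min (f ψ z * (Fintype.card Z : ℝ) ^ (1 / p).toReal) M)
    (fun _ _ => min_le_right _ _) fun ψ hψ => by
      have hsum := hM Z (f ψ) (hf ψ hψ).1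
      have hR := mul_le_mul_of_nonneg_right (hf ψ hψ).2
        (Real.rpow_nonneg hn.le (1 / p).toReal)
      rw [mul_assoc, ← Real.rpow_add hn, hα, Real.rpow_one, Finset.sum_mul] at hR
      linarith
  refine ⟨t, ht, J, hJ, fun σ => ?_⟩
  obtain ⟨ψ, hψ, hψJ⟩ := hJind σ
  refine ⟨ψ, hψ, fun z hz => (hψJ z hz).1, fun z hz => ?_⟩
  rw [Real.rpow_neg hn.le, ← div_eq_mul_inv, div_le_iff₀ (by positivity)]
  exact (hψJ z hz).2.trans (min_le_left _ _)

theorem func_to_indep (k : ℕ) (hk : 1 ≤ k) (r R C : ℝ) (hr : 0 < r) (hrR : r < R)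
    (hRC : R ≤ C) (p q : ℝ≥0∞) (hp : 1 < p) (hq : 1 ≤ q) (hq' : q ≠ ⊤)
    (hpq : 1 / p + 1 / q = 1) :
    ∃ (c N : ℝ) (T : Finset (Fin k → ℝ)), 0 < c ∧ 0 < N ∧
      (∀ t ∈ T, r ≤ (1 / k : ℝ) * ∑ j, t j) ∧
      ∀ (Z : Type) [Fintype Z], N ≤ (Fintype.card Z : ℝ) →
        ∀ f : (Z → Fin k) → (Z → ℝ),
          (∀ ψ, Equidistributed k ψ → lpNorm p (f ψ) ≤ C ∧
            R * (Fintype.card Z : ℝ) ^ (1 / q).toReal ≤ ∑ z, f ψ z) →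
          ∃ t ∈ T, ∃ J : Finset Z, c * (Fintype.card Z : ℝ) ≤ J.card ∧
            ∀ σ : Z → Fin k, ∃ ψ : Z → Fin k, Equidistributed k ψ ∧
              (∀ z ∈ J, ψ z = σ z) ∧
              ∀ z ∈ J, t (σ z) * (Fintype.card Z : ℝ) ^ (-(1 / p).toReal) ≤ f ψ z :=
  func_to_indep_general hk hrR C hp hpq
end
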